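/- Let f ∈ ℂ[x_1,…,x_n] be a polynomial that is tame in the sense that there exist C, δ > 0 such that ‖∇f(x)‖ ≥ δ whenever ‖x‖ ≥ C (in particular f has only finitely many critical points). Then the twisted de Rham cohomology H^k_f(ℂ) vanishes for all k ≠ n, and H^n_f(ℂ) is isomorphic as a ℂ-vector space to the Milnor (Jacobian) ring ℂ[x_1,…,x_n]/(∂f/∂x_1, …, ∂f/∂x_n); in particular dim_ℂ H^n_f(ℂ) equals the dimension of the Milnor ring. -/

import Mathlib

open MvPolynomial

noncomputable section

/-- Polynomial differential forms on `K^n`: a form assigns to each subset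
`s ⊆ {1,…,n}` (the indices of `dx_{i_1} ∧ ⋯ ∧ dx_{i_k}` with `i_1 < ⋯ < i_k`)
a polynomial coefficient. -/
abbrev Form (n : ℕ) (K : Type*) [CommRing K] :=
  Finset (Fin n) → MvPolynomial (Fin n) K

/-- The sign `(-1)^{#{j ∈ s | j < i}}`. -/
def sgn {n : ℕ} (K : Type*) [CommRing K] (s : Finset (Fin n)) (i : Fin n) :
    MvPolynomial (Fin n) K :=
  (-1) ^ (s.filter (fun j => j < i)).card

/-- The twisted de Rham differential `d_α ω = dω + α ∧ ω` associated to a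
(closed) polynomial 1-form `α = Σ_i α_i dx_i`. -/
def dTwist {n : ℕ} {K : Type*} [CommRing K]
    (α : Fin n → MvPolynomial (Fin n) K) :
    Form n K →ₗ[K] Form n K where
  toFun ω := fun s => ∑ i ∈ s,
    sgn K s i * (pderiv i (ω (s.erase i)) + α i * ω (s.erase i))
  map_add' ω₁ ω₂ := by
    funext s
    simp only [Pi.add_apply]
    rw [← Finset.sum_add_distrib]
    refine Finset.sum_congr rfl fun i _ => ?_
    simp only [map_add]
    ring
  map_smul' c ω := by
    funext s
    simp only [Pi.smul_apply, map_smul, RingHom.id_apply, Finset.smul_sum]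
    refine Finset.sum_congr rfl fun i _ => ?_
    simp [mul_add, mul_smul_comm, smul_add, mul_assoc]

/-- The (untwisted) polynomial de Rham differential. -/
abbrev dRham (n : ℕ) (K : Type*) [CommRing K] : Form n K →ₗ[K] Form n K :=
  dTwist (fun _ => 0)

/-- Multiplication of a form by a 1-form `α`, `ω ↦ α ∧ ω`. -/
def wedge1 {n : ℕ} {K : Type*} [CommRing K]
    (α : Fin n → MvPolynomial (Fin n) K) :
    Form n K →ₗ[K] Form n K where
  toFun ω := fun s => ∑ i ∈ s, sgn K s i * (α i * ω (s.erase i))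
  map_add' ω₁ ω₂ := by
    funext s
    simp only [Pi.add_apply]
    rw [← Finset.sum_add_distrib]
    refine Finset.sum_congr rfl fun i _ => ?_
    ring
  map_smul' c ω := by
    funext s
    simp only [Pi.smul_apply, RingHom.id_apply, Finset.smul_sum]
    refine Finset.sum_congr rfl fun i _ => ?_
    simp [mul_smul_comm]

/-- Forms of pure degree `k`: those supported on index sets of cardinality `k`. -/
def formDeg (n : ℕ) (K : Type*) [CommRing K] (k : ℕ) : Submodule K (Form n K) where
  carrier := {ω | ∀ s : Finset (Fin n), s.card ≠ k → ω s = 0}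
  add_mem' := by
    intro a b ha hb s hs
    simp [Pi.add_apply, ha s hs, hb s hs]
  zero_mem' := fun s _ => rfl
  smul_mem' := by
    intro c a ha s hs
    simp [Pi.smul_apply, ha s hs]

/-- Degree-`k` cocycles of the twisted de Rham complex. -/
def cocycles {n : ℕ} {K : Type*} [CommRing K]
    (α : Fin n → MvPolynomial (Fin n) K) (k : ℕ) : Submodule K (Form n K) :=
  formDeg n K k ⊓ LinearMap.ker (dTwist α)

/-- Degree-`k` coboundaries of the twisted de Rham complex. -/
def cobounds {n : ℕ} {K : Type*} [CommRing K]
    (α : Fin n → MvPolynomial (Fin n) K) (k : ℕ) : Submodule K (Form n K) :=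
  Submodule.map (dTwist α) (formDeg n K (k - 1))

/-- The degree-`k` twisted de Rham cohomology of the 1-form `α`. -/
abbrev Htwist {n : ℕ} {K : Type*} [CommRing K]
    (α : Fin n → MvPolynomial (Fin n) K) (k : ℕ) :=
  (cocycles α k) ⧸ (Submodule.comap (cocycles α k).subtype (cobounds α k))

/-- The differential `df` of a polynomial, as the family of coefficients of the
1-form `Σ_i (∂f/∂x_i) dx_i`. -/
def grad {n : ℕ} {K : Type*} [CommRing K] (f : MvPolynomial (Fin n) K) :
    Fin n → MvPolynomial (Fin n) K :=
  fun i => pderiv i f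

/-- The twisted de Rham cohomology `H^k_f(K)` of a polynomial `f`. -/
abbrev Hf {n : ℕ} {K : Type*} [CommRing K] (f : MvPolynomial (Fin n) K) (k : ℕ) :=
  Htwist (grad f) k

/-- The top form `dx_1 ∧ ⋯ ∧ dx_n`. -/
def topForm (n : ℕ) (K : Type*) [CommRing K] : Form n K :=
  fun s => if s = Finset.univ then 1 else 0



section Part1

section Setup
variable {n : ℕ} {R : Type*} [CommRing R]

/-- the operator `ε ∂_i + ∂_i f` -/
def xiOp (ε : R) (f : MvPolynomial (Fin n) R) (i : Fin n) :
    Module.End R (MvPolynomial (Fin n) R) :=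
  ε • (pderiv i).toLinearMap + LinearMap.mulLeft R (pderiv i f)

theorem xiOp_apply (ε : R) (f : MvPolynomial (Fin n) R) (i : Fin n) (p) :
    xiOp ε f i p = ε • pderiv i p + pderiv i f * p := by
  simp [xiOp]

theorem pderiv_pderiv_comm (i j : Fin n) (p : MvPolynomial (Fin n) R) :
    pderiv i (pderiv j p) = pderiv j (pderiv i p) := by
  have h : ⁅(pderiv i : Derivation R (MvPolynomial (Fin n) R) (MvPolynomial (Fin n) R)),
      (pderiv j : Derivation R (MvPolynomial (Fin n) R) (MvPolynomial (Fin n) R))⁆ = 0 := by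
    apply MvPolynomial.derivation_ext
    intro k
    simp only [Derivation.commutator_apply, pderiv_X, Pi.single_apply, Derivation.zero_apply]
    split_ifs <;> simp
  have := congrArg (fun D => D p) h
  simpa [Derivation.commutator_apply, sub_eq_zero] using this

theorem xiOp_comm (ε : R) (f : MvPolynomial (Fin n) R) (i j : Fin n) :
    xiOp ε f i * xiOp ε f j = xiOp ε f j * xiOp ε f i := by
  ext1 p
  apply LinearMap.ext
  intro q
  simp only [Module.End.mul_apply, LinearMap.comp_apply, xiOp_apply, map_add, map_smul, Derivation.leibniz, smul_eq_mul,
    pderiv_pderiv_comm i j]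
  simp only [smul_add, mul_add, smul_smul, mul_smul_comm]
  ring

/-- the action of `R[ξ]` on `R[x]` -/
def rho (ε : R) (f : MvPolynomial (Fin n) R) :
    MvPolynomial (Fin n) R →ₐ[R] Module.End R (MvPolynomial (Fin n) R) :=
  letI : CommRing (Algebra.adjoin R (Set.range (xiOp ε f))) :=
    Algebra.adjoinCommRingOfComm R (by
      rintro _ ⟨i, rfl⟩ _ ⟨j, rfl⟩; exact xiOp_comm ε f i j)
  (Algebra.adjoin R (Set.range (xiOp ε f))).val.comp
    (@aeval R (Algebra.adjoin R (Set.range (xiOp ε f))) (Fin n) _ _ _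
      (fun i => ⟨xiOp ε f i, Algebra.subset_adjoin ⟨i, rfl⟩⟩))

theorem rho_X (ε : R) (f : MvPolynomial (Fin n) R) (i : Fin n) :
    rho ε f (X i) = xiOp ε f i := by
  letI : CommRing (Algebra.adjoin R (Set.range (xiOp ε f))) :=
    Algebra.adjoinCommRingOfComm R (by
      rintro _ ⟨i, rfl⟩ _ ⟨j, rfl⟩; exact xiOp_comm ε f i j)
  unfold rho
  simp only [AlgHom.comp_apply]
  rw [aeval_X]
  rfl

theorem rho_C (ε : R) (f : MvPolynomial (Fin n) R) (c : R) (p) :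
    rho ε f (C c) p = c • p := by
  have : rho ε f (C c) = algebraMap R _ c := AlgHom.commutes _ c
  rw [this]; rfl

theorem rho_mul_apply (ε : R) (f : MvPolynomial (Fin n) R) (q r p) :
    rho ε f (q * r) p = rho ε f q (rho ε f r p) := by
  rw [map_mul]; rfl

theorem rho_add_apply (ε : R) (f : MvPolynomial (Fin n) R) (q r p) :
    rho ε f (q + r) p = rho ε f q p + rho ε f r p := by
  rw [map_add]; rfl

theorem rho_map {R' : Type*} [CommRing R'] (φ : R →+* R') (ε : R) (f : MvPolynomial (Fin n) R)
    (q p) : map φ (rho ε f q p) = rho (φ ε) (map φ f) (map φ q) (map φ p) := by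
  induction q using MvPolynomial.induction_on generalizing p with
  | C a => rw [map_C, rho_C, rho_C, smul_eq_C_mul, smul_eq_C_mul, map_mul, map_C]
  | add q r hq hr => rw [rho_add_apply, map_add, map_add, rho_add_apply, hq, hr]
  | mul_X q i hq =>
    rw [rho_mul_apply, hq, map_mul, rho_mul_apply, map_X, rho_X, rho_X]
    congr 1
    simp [xiOp_apply, pderiv_map, smul_eq_C_mul]

theorem X_mul_xiOp (ε : R) (f : MvPolynomial (Fin n) R) (i j : Fin n) (p) :
    X i * xiOp ε f j p = xiOp ε f j (X i * p) - if i = j then ε • p else 0 := by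
  simp only [xiOp_apply, Derivation.leibniz, pderiv_X, smul_eq_mul, Pi.single_apply]
  split_ifs with h1
  · simp only [mul_add, smul_add, smul_eq_C_mul]; ring
  · simp only [mul_add, smul_add, smul_eq_C_mul]; ring

theorem X_mul_rho (ε : R) (f : MvPolynomial (Fin n) R) (i : Fin n) (q p) :
    X i * rho ε f q p = rho ε f q (X i * p) - ε • rho ε f (pderiv i q) p := by
  induction q using MvPolynomial.induction_on generalizing p with
  | C a => simp [rho_C]
  | add q r hq hr =>
    rw [rho_add_apply, rho_add_apply, map_add (pderiv i), rho_add_apply, mul_add, hq, hr, smul_add]; ring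
  | mul_X q j hq =>
    have e : rho ε f (pderiv i (q * X j)) p =
        (if i = j then rho ε f q p else 0) + rho ε f (pderiv i q) (xiOp ε f j p) := by
      rw [Derivation.leibniz, smul_eq_mul, smul_eq_mul, rho_add_apply, mul_comm (X j),
        rho_mul_apply _ _ _ (X j), rho_X, pderiv_X, Pi.single_apply]
      by_cases h : i = j
      · subst h; simp
      · rw [if_neg (fun h' => h h'.symm), if_neg h]; simp
    rw [e, rho_mul_apply, rho_X, hq, X_mul_xiOp, rho_mul_apply, rho_X, map_sub]
    split_ifs
    · rw [map_smul, smul_add]; ring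
    · simp

theorem rho_zero_eps (f : MvPolynomial (Fin n) R) (q p) :
    rho 0 f q p = aeval (fun i => pderiv i f) q * p := by
  induction q using MvPolynomial.induction_on generalizing p with
  | C a => simp [rho_C, smul_eq_C_mul]
  | add q r hq hr => rw [rho_add_apply, map_add, add_mul, hq, hr]
  | mul_X q j hq =>
    rw [rho_mul_apply, rho_X, hq, xiOp_apply, map_mul, aeval_X]; simp [mul_assoc]

/-- exponents of `ξ` and `x` -/
abbrev Expo (n : ℕ) := (Fin n →₀ ℕ) × (Fin n →₀ ℕ)

/-- `ξ^α x^β` -/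
def eMon (ε : R) (f : MvPolynomial (Fin n) R) (γ : Expo n) : MvPolynomial (Fin n) R :=
  rho ε f (monomial γ.1 1) (monomial γ.2 1)

theorem eMon_map {R' : Type*} [CommRing R'] (φ : R →+* R') (ε : R) (f : MvPolynomial (Fin n) R)
    (γ) : map φ (eMon ε f γ) = eMon (φ ε) (map φ f) γ := by
  simp [eMon, rho_map]

theorem eMon_zero_left (ε : R) (f : MvPolynomial (Fin n) R) (β) :
    eMon ε f (0, β) = monomial β 1 := by
  have := rho_C ε f 1 (monomial β 1)
  simpa [eMon] using this

theorem xiOp_eMon (ε : R) (f : MvPolynomial (Fin n) R) (i : Fin n) (γ) :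
    xiOp ε f i (eMon ε f γ) = eMon ε f (γ.1 + Finsupp.single i 1, γ.2) := by
  unfold eMon
  rw [← rho_X, ← rho_mul_apply, mul_comm, X, monomial_mul]; simp

theorem X_mul_eMon (ε : R) (f : MvPolynomial (Fin n) R) (i : Fin n) (γ) :
    X i * eMon ε f γ = eMon ε f (γ.1, γ.2 + Finsupp.single i 1) -
      (ε * (γ.1 i : R)) • eMon ε f (γ.1 - Finsupp.single i 1, γ.2) := by
  unfold eMon
  rw [X_mul_rho, pderiv_monomial]
  have h1 : (X i : MvPolynomial (Fin n) R) * monomial γ.2 1 =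
    monomial (γ.2 + Finsupp.single i 1) 1 := by
    rw [X, monomial_mul]; simp [add_comm]
  have h2 : (monomial (γ.1 - Finsupp.single i 1) (1 * (γ.1 i : R)) : MvPolynomial (Fin n) R) =
    C (γ.1 i : R) * monomial (γ.1 - Finsupp.single i 1) 1 := by
    rw [C_mul_monomial]; simp
  rw [h1, h2, rho_mul_apply, rho_C, smul_smul]

theorem eMon_zero_eps (f : MvPolynomial (Fin n) R) (γ) :
    eMon 0 f γ = (γ.1.prod fun i k => pderiv i f ^ k) * monomial γ.2 1 := by
  rw [eMon, rho_zero_eps, aeval_monomial]; simp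

/-- span of `ξ^α x^β` for exponents in `A`. -/
def eSpan (ε : R) (f : MvPolynomial (Fin n) R) (A : Set (Expo n)) :
    Submodule R (MvPolynomial (Fin n) R) :=
  Submodule.span R (eMon ε f '' A)

/-- exponents of `F_j`. -/
def FE (n j : ℕ) : Set (Expo n) := {γ | γ.2.degree ≤ j}

/-- exponents of `E_j`. -/
def EE (n j : ℕ) : Set (Expo n) := {γ | γ.2.degree < j ∨ (γ.1 ≠ 0 ∧ γ.2.degree ≤ j)}

theorem eSpan_mono (ε : R) (f : MvPolynomial (Fin n) R) {A B : Set (Expo n)} (h : A ⊆ B) :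
    eSpan ε f A ≤ eSpan ε f B := Submodule.span_mono (Set.image_mono h)

theorem eMon_mem (ε : R) (f : MvPolynomial (Fin n) R) {A : Set (Expo n)} {γ} (h : γ ∈ A) :
    eMon ε f γ ∈ eSpan ε f A := Submodule.subset_span ⟨γ, h, rfl⟩

theorem EE_sub_FE (j : ℕ) : EE n j ⊆ FE n j := by
  rintro γ (h | h)
  · exact le_of_lt h
  · exact h.2

theorem X_mul_eSpan (ε : R) (f : MvPolynomial (Fin n) R) (i : Fin n) {A B : Set (Expo n)}
    (h1 : ∀ γ ∈ A, (γ.1, γ.2 + Finsupp.single i 1) ∈ B)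
    (h2 : ∀ γ ∈ A, (γ.1 - Finsupp.single i 1, γ.2) ∈ B) {v} (hv : v ∈ eSpan ε f A) :
    X i * v ∈ eSpan ε f B := by
  induction hv using Submodule.span_induction with
  | mem x hx =>
    obtain ⟨γ, hγ, rfl⟩ := hx
    rw [X_mul_eMon]
    exact sub_mem (eMon_mem _ _ (h1 γ hγ)) (Submodule.smul_mem _ _ (eMon_mem _ _ (h2 γ hγ)))
  | zero => simp
  | add x y _ _ hx hy => rw [mul_add]; exact add_mem hx hy
  | smul a x _ hx => rw [mul_smul_comm]; exact Submodule.smul_mem _ _ hx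

theorem xiOp_eSpan (ε : R) (f : MvPolynomial (Fin n) R) (i : Fin n) {A B : Set (Expo n)}
    (h1 : ∀ γ ∈ A, (γ.1 + Finsupp.single i 1, γ.2) ∈ B) {v} (hv : v ∈ eSpan ε f A) :
    xiOp ε f i v ∈ eSpan ε f B := by
  induction hv using Submodule.span_induction with
  | mem x hx =>
    obtain ⟨γ, hγ, rfl⟩ := hx
    rw [xiOp_eMon]
    exact eMon_mem _ _ (h1 γ hγ)
  | zero => simp
  | add x y _ _ hx hy => rw [map_add]; exact add_mem hx hy
  | smul a x _ hx => rw [map_smul]; exact Submodule.smul_mem _ _ hx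

theorem X_mul_FE (ε : R) (f : MvPolynomial (Fin n) R) (i : Fin n) (j : ℕ) {v}
    (hv : v ∈ eSpan ε f (FE n j)) : X i * v ∈ eSpan ε f (FE n (j + 1)) := by
  refine X_mul_eSpan ε f i ?_ ?_ hv <;> intro γ h <;> simp only [FE, Set.mem_ofPred_eq] at *
  · simp [map_add, h]
  · omega

theorem X_mul_EE (ε : R) (f : MvPolynomial (Fin n) R) (i : Fin n) (j : ℕ) {v}
    (hv : v ∈ eSpan ε f (EE n j)) : X i * v ∈ eSpan ε f (EE n (j + 1)) := by
  refine X_mul_eSpan ε f i ?_ ?_ hv <;> intro γ h <;> simp only [EE, Set.mem_ofPred_eq] at *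
  · rcases h with h | h
    · left; simpa [map_add] using h
    · right; simpa [map_add] using h
  · left; omega

/-- eSpan under base change -/
theorem eSpan_map {R' : Type*} [CommRing R'] (φ : R →+* R') (ε : R) (f : MvPolynomial (Fin n) R)
    {A : Set (Expo n)} {v} (hv : v ∈ eSpan ε f A) :
    map φ v ∈ eSpan (φ ε) (map φ f) A := by
  induction hv using Submodule.span_induction with
  | mem x hx =>
    obtain ⟨γ, hγ, rfl⟩ := hx
    rw [eMon_map]
    exact eMon_mem _ _ hγ
  | zero => simp
  | add x y _ _ hx hy => rw [map_add]; exact add_mem hx hy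
  | smul a x _ hx => 
    rw [smul_eq_C_mul, map_mul, map_C, ← smul_eq_C_mul]; exact Submodule.smul_mem _ _ hx

theorem mem_eSpan_iff {ε : R} {f : MvPolynomial (Fin n) R} {A : Set (Expo n)} {v} :
    v ∈ eSpan ε f A ↔ ∃ c : Expo n →₀ R, (∀ γ ∈ c.support, γ ∈ A) ∧
      v = c.sum fun γ a => a • eMon ε f γ := by
  unfold eSpan
  rw [Finsupp.mem_span_image_iff_linearCombination]
  constructor
  · rintro ⟨c, hc, rfl⟩
    exact ⟨c, fun γ h => (Finsupp.mem_supported _ _).1 hc h, rfl⟩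
  · rintro ⟨c, hc, rfl⟩
    exact ⟨c, (Finsupp.mem_supported _ _).2 hc, rfl⟩

end Setup

end Part1

section Part2

section Groebner
variable {n : ℕ}

/-- ordering key: `x`-degree first, then lexicographic -/
def gkey (γ : Expo n) :
    ℕ ×ₗ ((MonomialOrder.lex (σ := Fin n)).syn ×ₗ (MonomialOrder.lex (σ := Fin n)).syn) :=
  toLex (γ.2.degree, toLex (MonomialOrder.lex.toSyn γ.2, MonomialOrder.lex.toSyn γ.1))

theorem gkey_inj : Function.Injective (gkey (n := n)) := by
  intro γ γ' h
  unfold gkey at h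
  have h' := toLex.injective h
  rw [Prod.mk.injEq] at h'
  have h2 := toLex.injective h'.2
  rw [Prod.mk.injEq] at h2
  exact Prod.ext (MonomialOrder.lex.toSyn.injective h2.2) (MonomialOrder.lex.toSyn.injective h2.1)

theorem gkey_add_lt {γ γ' : Expo n} (δ : Expo n) (h : gkey γ < gkey γ') :
    gkey (γ + δ) < gkey (γ' + δ) := by
  unfold gkey at *
  rw [Prod.Lex.toLex_lt_toLex, Prod.Lex.toLex_lt_toLex] at *
  simp only [Prod.fst_add, Prod.snd_add, map_add] at *
  rcases h with h | ⟨h1, h | ⟨h2, h3⟩⟩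
  · left; omega
  · right; refine ⟨by omega, Or.inl ?_⟩
    exact add_lt_add_left h _
  · right; refine ⟨by omega, Or.inr ⟨by rw [h2], ?_⟩⟩
    exact add_lt_add_left h3 _

theorem gkey_lt_of_degree {γ γ' : Expo n} (h : γ.2.degree < γ'.2.degree) : gkey γ < gkey γ' := by
  unfold gkey
  rw [Prod.Lex.toLex_lt_toLex]
  exact Or.inl h

theorem degree_le_of_gkey {γ γ' : Expo n} (h : gkey γ ≤ gkey γ') : γ.2.degree ≤ γ'.2.degree := by
  by_contra h'
  exact absurd (gkey_lt_of_degree (not_le.1 h')) (not_lt.2 h)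

/-- nonstandard exponents -/
def Nonstd {R : Type*} [CommRing R] (ε : R) (f : MvPolynomial (Fin n) R) (γ : Expo n) : Prop :=
  eMon ε f γ ∈ eSpan ε f {γ' | gkey γ' < gkey γ}

section
variable {R : Type*} [CommRing R] {ε : R} {f : MvPolynomial (Fin n) R}

theorem Nonstd.xi {γ : Expo n} (h : Nonstd ε f γ) (i : Fin n) :
    Nonstd ε f (γ + (Finsupp.single i 1, 0)) := by
  have h2 := xiOp_eSpan ε f i (B := {γ' | gkey γ' < gkey (γ + (Finsupp.single i 1, 0))}) ?_ h
  · rw [xiOp_eMon] at h2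
    have e : ((γ.1 + Finsupp.single i 1, γ.2) : Expo n) = γ + (Finsupp.single i 1, 0) := by
      ext <;> simp
    rw [e] at h2; exact h2
  · intro γ' h'
    have e : ((γ'.1 + Finsupp.single i 1, γ'.2) : Expo n) = γ' + (Finsupp.single i 1, 0) := by
      ext <;> simp
    rw [e]; exact gkey_add_lt _ h'

theorem Nonstd.x {γ : Expo n} (h : Nonstd ε f γ) (i : Fin n) :
    Nonstd ε f (γ + (0, Finsupp.single i 1)) := by
  have e : ∀ γ' : Expo n, ((γ'.1, γ'.2 + Finsupp.single i 1) : Expo n) =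
      γ' + (0, Finsupp.single i 1) := by
    intro γ'; ext <;> simp
  have h2 := X_mul_eSpan ε f i (B := {γ' | gkey γ' < gkey (γ + (0, Finsupp.single i 1))}) ?_ ?_ h
  · rw [X_mul_eMon, e] at h2
    have h3 : eMon ε f (γ.1 - Finsupp.single i 1, γ.2) ∈
        eSpan ε f {γ' | gkey γ' < gkey (γ + (0, Finsupp.single i 1))} :=
      eMon_mem _ _ (gkey_lt_of_degree (by simp))
    have := add_mem h2 (Submodule.smul_mem _ (ε * (γ.1 i : R)) h3)
    rw [sub_add_cancel] at this
    exact this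
  · intro γ' h'
    rw [e]; exact gkey_add_lt _ h'
  · intro γ' h'
    apply gkey_lt_of_degree
    have := degree_le_of_gkey (le_of_lt h')
    simp; omega

theorem Nonstd.add {γ : Expo n} (h : Nonstd ε f γ) (δ : Expo n) : Nonstd ε f (γ + δ) := by
  have h1 : ∀ (a : Fin n →₀ ℕ) (γ : Expo n), Nonstd ε f γ → Nonstd ε f (γ + (a, 0)) := by
    intro a
    induction a using Finsupp.induction_linear with
    | zero => intro γ h; rw [show ((0, 0) : Expo n) = 0 from rfl, add_zero]; exact h
    | add a b ha hb => 
      intro γ h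
      rw [show ((a + b, 0) : Expo n) = (a, 0) + (b, 0) by simp, ← add_assoc]
      exact hb _ (ha _ h)
    | single i k =>
      induction k with
      | zero => 
        intro γ h; rw [Finsupp.single_zero, show ((0, 0) : Expo n) = 0 from rfl, add_zero]; exact h
      | succ k ih =>
        intro γ h
        rw [Finsupp.single_add, show ((Finsupp.single i k + Finsupp.single i 1, 0) : Expo n) =
          (Finsupp.single i k, 0) + (Finsupp.single i 1, 0) by simp, ← add_assoc]
        exact (ih γ h).xi i
  have h2 : ∀ (a : Fin n →₀ ℕ) (γ : Expo n), Nonstd ε f γ → Nonstd ε f (γ + (0, a)) := by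
    intro a
    induction a using Finsupp.induction_linear with
    | zero => intro γ h; rw [show ((0, 0) : Expo n) = 0 from rfl, add_zero]; exact h
    | add a b ha hb => 
      intro γ h
      rw [show ((0, a + b) : Expo n) = (0, a) + (0, b) by simp, ← add_assoc]
      exact hb _ (ha _ h)
    | single i k =>
      induction k with
      | zero => 
        intro γ h; rw [Finsupp.single_zero, show ((0, 0) : Expo n) = 0 from rfl, add_zero]; exact h
      | succ k ih =>
        intro γ h
        rw [Finsupp.single_add, show ((0, Finsupp.single i k + Finsupp.single i 1) : Expo n) =
          (0, Finsupp.single i k) + (0, Finsupp.single i 1) by simp, ← add_assoc]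
        exact (ih γ h).x i
  have : γ + δ = γ + (δ.1, 0) + (0, δ.2) := by ext <;> simp
  rw [this]
  exact h2 _ _ (h1 _ _ h)

theorem Nonstd.of_le {γ γ' : Expo n} (h : Nonstd ε f γ) (hle : γ ≤ γ') : Nonstd ε f γ' := by
  have : γ' = γ + (γ'.1 - γ.1, γ'.2 - γ.2) := by
    refine Prod.ext ?_ ?_
    · simp only [Prod.fst_add]; rw [add_tsub_cancel_of_le hle.1]
    · simp only [Prod.snd_add]; rw [add_tsub_cancel_of_le hle.2]
  rw [this]; exact h.add _

end

/-- Dickson lemma -/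
theorem exists_finite_minimal (S : Set (Expo n)) :
    ∃ T : Set (Expo n), T.Finite ∧ T ⊆ S ∧ ∀ γ ∈ S, ∃ t ∈ T, t ≤ γ := by
  refine ⟨{t | Minimal (· ∈ S) t}, ?_, fun t h => h.1, ?_⟩
  · have : IsAntichain (· ≤ ·) {t : Expo n | Minimal (· ∈ S) t} := setOf_minimal_antichain _
    exact WellQuasiOrderedLE.finite_of_isAntichain this
  · intro γ hγ
    obtain ⟨t, h1, h2⟩ := exists_minimal_le_of_wellFoundedLT (· ∈ S) γ hγ
    exact ⟨t, h2, h1⟩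

section
variable {Λ K : Type*} [CommRing Λ] [Field K] (φ : Λ →+* K) (ε : Λ) (f : MvPolynomial (Fin n) Λ)

theorem std_indep (hφ : Function.Injective φ) (c : Expo n →₀ Λ)
    (hc : ∀ γ ∈ c.support, ¬ Nonstd (φ ε) (map φ f) γ)
    (h0 : (c.sum fun γ a => a • eMon ε f γ) = 0) : c = 0 := by
  by_contra hne
  have hs : c.support.Nonempty := Finsupp.support_nonempty_iff.2 hne
  obtain ⟨γ, hγ, hmax⟩ := Finset.exists_max_image c.support gkey hs
  refine hc γ hγ ?_
  have h1 := congrArg (map φ) h0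
  rw [Finsupp.sum, map_sum, map_zero] at h1
  rw [← Finset.add_sum_erase _ _ hγ] at h1
  have h2 : ∀ γ', map φ (c γ' • eMon ε f γ') = φ (c γ') • eMon (φ ε) (map φ f) γ' := by
    intro γ'; rw [smul_eq_C_mul, map_mul, map_C, eMon_map, ← smul_eq_C_mul]
  simp only [h2] at h1
  have hu : φ (c γ) ≠ 0 := by
    rw [Ne, map_eq_zero_iff φ hφ]; exact Finsupp.mem_support_iff.1 hγ
  have h3 : eMon (φ ε) (map φ f) γ =
      (φ (c γ))⁻¹ • (-(∑ x ∈ c.support.erase γ, φ (c x) • eMon (φ ε) (map φ f) x)) := by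
    rw [← eq_neg_iff_add_eq_zero.2 h1, smul_smul, inv_mul_cancel₀ hu, one_smul]
  unfold Nonstd
  rw [h3]
  refine Submodule.smul_mem _ _ (neg_mem (sum_mem fun x hx => Submodule.smul_mem _ _ ?_))
  rw [Finset.mem_erase] at hx
  exact eMon_mem _ _ (lt_of_le_of_ne (hmax x hx.2) (fun h => hx.1 (gkey_inj h)))

theorem std_span (hT : ∀ γ, Nonstd (φ ε) (map φ f) γ → Nonstd ε f γ) (γ : Expo n) :
    eMon ε f γ ∈ eSpan ε f {γ' | ¬ Nonstd (φ ε) (map φ f) γ' ∧ gkey γ' ≤ gkey γ} := by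
  induction h : gkey γ using WellFoundedLT.induction generalizing γ with
  | ind k ih =>
    subst h
    by_cases hs : Nonstd (φ ε) (map φ f) γ
    · have h1 := hT γ hs
      refine Submodule.span_le.2 ?_ h1
      rintro _ ⟨γ', hγ', rfl⟩
      refine eSpan_mono ε f ?_ (ih _ hγ' γ' rfl)
      intro x hx
      exact ⟨hx.1, hx.2.trans (le_of_lt hγ')⟩
    · exact eMon_mem _ _ ⟨hs, le_rfl⟩

theorem groebner_saturated (hφ : Function.Injective φ)
    (hT : ∀ γ, Nonstd (φ ε) (map φ f) γ → Nonstd ε f γ) (I : Ideal Λ) (N : ℕ)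
    (v : MvPolynomial (Fin n) Λ) (hv : v ∈ eSpan ε f (FE n N)) (hI : ∀ β, coeff β v ∈ I) :
    ∃ c : Expo n →₀ Λ, (∀ γ ∈ c.support, γ ∈ FE n N) ∧ (∀ γ, c γ ∈ I) ∧
      v = c.sum fun γ a => a • eMon ε f γ := by
  have h1 : v ∈ eSpan ε f {γ' | ¬ Nonstd (φ ε) (map φ f) γ' ∧ γ' ∈ FE n N} := by
    refine Submodule.span_le.2 ?_ hv
    rintro _ ⟨γ, hγ, rfl⟩
    refine eSpan_mono ε f ?_ (std_span φ ε f hT γ)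
    intro x hx
    exact ⟨hx.1, (degree_le_of_gkey hx.2).trans hγ⟩
  obtain ⟨c, hc, rfl⟩ := mem_eSpan_iff.1 h1
  refine ⟨c, fun γ h => (hc γ h).2, ?_, rfl⟩
  set v := (c.sum fun γ a => a • eMon ε f γ) with hvd
  have h2 : ∀ β : Fin n →₀ ℕ, ∃ d : Expo n →₀ Λ,
      (∀ γ ∈ d.support, ¬ Nonstd (φ ε) (map φ f) γ) ∧
      monomial β 1 = d.sum fun γ a => a • eMon ε f γ := by
    intro β
    obtain ⟨d, hd, hd'⟩ := mem_eSpan_iff.1 (std_span φ ε f hT (0, β))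
    exact ⟨d, fun γ h => (hd γ h).1, by rw [← hd', eMon_zero_left]⟩
  choose d hd hd' using h2
  let L : (Expo n →₀ Λ) →ₗ[Λ] MvPolynomial (Fin n) Λ :=
    Finsupp.linearCombination Λ (eMon ε f)
  have hL : ∀ c : Expo n →₀ Λ, L c = c.sum fun γ a => a • eMon ε f γ := fun c => rfl
  have hcd : c - ∑ β ∈ v.support, coeff β v • d β = 0 := by
    apply std_indep φ ε f hφ
    · intro γ hγ
      have := Finsupp.support_sub hγ
      by_contra hns
      have z1 : c γ = 0 := by
        by_contra h; exact (hc γ (Finsupp.mem_support_iff.2 h)).1 hns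
      have z2 : ∀ β, d β γ = 0 := by
        intro β
        by_contra h; exact (hd β γ (Finsupp.mem_support_iff.2 h)) hns
      rw [Finsupp.mem_support_iff] at hγ
      apply hγ
      simp [z1, z2, Finsupp.finsetSum_apply]
    · rw [← hL, map_sub, map_sum, sub_eq_zero, hL c, ← hvd]
      have : ∀ β ∈ v.support, L (coeff β v • d β) = monomial β (coeff β v) := by
        intro β _
        rw [map_smul, hL, ← hd', smul_monomial, smul_eq_mul, mul_one]
      rw [Finset.sum_congr rfl this]
      exact v.as_sum
  rw [sub_eq_zero] at hcd
  intro γ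
  rw [hcd, Finsupp.finsetSum_apply]
  refine sum_mem fun β _ => ?_
  rw [Finsupp.smul_apply, smul_eq_mul]
  exact I.mul_mem_right _ (hI β)

end
end Groebner

end Part2

section Part3

section Frob
variable {n : ℕ} {κ : Type*} [Field κ] (p : ℕ) [Fact p.Prime] [CharP κ p]

/-- auxiliary operator for the `p`-th power computation -/
def dSeq (f : MvPolynomial (Fin n) κ) (i : Fin n) (u : ℕ → MvPolynomial (Fin n) κ) :
    ℕ → MvPolynomial (Fin n) κ
  | 0 => pderiv i (u 0)
  | k + 1 => pderiv i (u (k + 1)) + pderiv i f * u k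

theorem dSeq_add (f : MvPolynomial (Fin n) κ) (i : Fin n) (u v) :
    dSeq f i (u + v) = dSeq f i u + dSeq f i v := by
  funext k
  cases k with
  | zero => simp [dSeq]
  | succ k => simp [dSeq]; ring

theorem dSeq_iter_add (f : MvPolynomial (Fin n) κ) (i : Fin n) (m : ℕ) (u v) :
    (dSeq f i)^[m] (u + v) = (dSeq f i)^[m] u + (dSeq f i)^[m] v := by
  induction m generalizing u v with
  | zero => rfl
  | succ m ih => simp only [Function.iterate_succ_apply, dSeq_add, ih]

theorem dSeq_smul (f : MvPolynomial (Fin n) κ) (i : Fin n) (a : MvPolynomial (Fin n) κ) (u) :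
    dSeq f i (a • u) = a • dSeq f i u + (pderiv i a) • u := by
  funext k
  cases k with
  | zero => simp [dSeq, Derivation.leibniz]; ring
  | succ k => simp [dSeq, Derivation.leibniz]; ring

theorem dSeq_iter_const (f : MvPolynomial (Fin n) κ) (i : Fin n) (m : ℕ)
    (a : MvPolynomial (Fin n) κ) (ha : pderiv i a = 0) (u) :
    (dSeq f i)^[m] (a • u) = a • (dSeq f i)^[m] u := by
  induction m generalizing u with
  | zero => rfl
  | succ m ih => rw [Function.iterate_succ_apply, dSeq_smul, ha, zero_smul, add_zero, ih]; rfl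

theorem dSeq_iter_X (f : MvPolynomial (Fin n) κ) (i : Fin n) (m : ℕ) (u) :
    (dSeq f i)^[m + 1] ((X i : MvPolynomial (Fin n) κ) • u) =
      (X i : MvPolynomial (Fin n) κ) • (dSeq f i)^[m + 1] u +
        ((m + 1 : ℕ) : MvPolynomial (Fin n) κ) • (dSeq f i)^[m] u := by
  induction m generalizing u with
  | zero => simp [dSeq_smul]
  | succ m ih =>
    rw [Function.iterate_succ_apply, dSeq_smul, dSeq_iter_add, ih, pderiv_X_self, one_smul,
      ← Function.iterate_succ_apply, ← Function.iterate_succ_apply]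
    push_cast
    simp only [add_smul, one_smul]
    rw [add_assoc]

theorem dSeq_iter_p (f : MvPolynomial (Fin n) κ) (i : Fin n) (a : MvPolynomial (Fin n) κ) (u) :
    (dSeq f i)^[p] (a • u) = a • (dSeq f i)^[p] u := by
  have hp : p ≠ 0 := (Fact.out : p.Prime).ne_zero
  induction a using MvPolynomial.induction_on generalizing u with
  | C c => exact dSeq_iter_const f i p (C c) (by simp) u
  | add a b ha hb => rw [add_smul, dSeq_iter_add, ha, hb, add_smul]
  | mul_X a j ha =>
    rw [mul_smul, ha, mul_smul]
    congr 1
    by_cases hij : j = i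
    · subst hij
      obtain ⟨m, rfl⟩ := Nat.exists_eq_succ_of_ne_zero hp
      rw [dSeq_iter_X]
      have : ((m + 1 : ℕ) : MvPolynomial (Fin n) κ) = 0 := CharP.cast_eq_zero _ _
      rw [this, zero_smul, add_zero]
    · exact dSeq_iter_const f i p (X j) (pderiv_X_of_ne hij) u

/-- derivative in the auxiliary parameter plus multiplication by `f` -/
def tSeq (f : MvPolynomial (Fin n) κ) (u : ℕ → MvPolynomial (Fin n) κ) :
    ℕ → MvPolynomial (Fin n) κ := fun k => ((k + 1 : ℕ) : MvPolynomial (Fin n) κ) * u (k + 1) + f * u k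

theorem tSeq_comm (f : MvPolynomial (Fin n) κ) (i : Fin n) (u) :
    tSeq f (dSeq f i u) = dSeq f i (tSeq f u) := by
  funext k
  have h : ∀ m : ℕ, pderiv i ((m : MvPolynomial (Fin n) κ)) = 0 := fun m => by
    simp
  cases k with
  | zero =>
    simp [dSeq, tSeq, Derivation.leibniz]; ring
  | succ k =>
    simp only [dSeq, tSeq, Derivation.leibniz, map_add, h, smul_eq_mul]
    push_cast
    ring

theorem tSeq_iter_comm (f : MvPolynomial (Fin n) κ) (i : Fin n) (m : ℕ) (u) :
    tSeq f ((dSeq f i)^[m] u) = (dSeq f i)^[m] (tSeq f u) := by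
  induction m generalizing u with
  | zero => rfl
  | succ m ih => rw [Function.iterate_succ_apply, ih, tSeq_comm, Function.iterate_succ_apply]

/-- the starting sequence -/
def oneSeq : ℕ → MvPolynomial (Fin n) κ := fun k => if k = 0 then 1 else 0

theorem hSeq_top (f : MvPolynomial (Fin n) κ) (i : Fin n) (m : ℕ) :
    (dSeq f i)^[m] oneSeq m = pderiv i f ^ m ∧
    (∀ k, m < k → (dSeq f i)^[m] oneSeq k = 0) ∧ (0 < m → (dSeq f i)^[m] oneSeq 0 = 0) ∧
    (xiOp 1 f i ^ m) 1 = ∑ k ∈ Finset.range (m + 1), (dSeq f i)^[m] oneSeq k := by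
  induction m with
  | zero =>
    refine ⟨by simp [oneSeq], fun k hk => ?_, by simp, by simp [oneSeq]⟩
    simp [oneSeq]; omega
  | succ m ih =>
    obtain ⟨h1, h2, h3, h4⟩ := ih
    simp only [Function.iterate_succ_apply']
    set w := (dSeq f i)^[m] oneSeq with hw
    refine ⟨?_, ?_, ?_, ?_⟩
    · simp only [dSeq]; rw [h1, h2 _ (by omega), map_zero, pow_succ']; simp
    · intro k hk
      cases k with
      | zero => omega
      | succ k => simp only [dSeq]; rw [h2 _ (by omega), h2 _ (by omega)]; simp
    · intro _
      simp only [dSeq]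
      cases m with
      | zero => simp [hw, oneSeq]
      | succ m => rw [h3 (by omega), map_zero]
    · rw [pow_succ', Module.End.mul_apply, h4, xiOp_apply, one_smul, Finset.mul_sum, map_sum,
        Finset.sum_range_succ' _ (m + 1)]
      simp only [dSeq]
      rw [Finset.sum_add_distrib, Finset.sum_range_succ (fun k => pderiv i (w (k + 1))) m,
        h2 (m + 1) (by omega), map_zero, Finset.sum_range_succ' (fun k => pderiv i (w k)) m]
      ring

theorem xiOp_pow_p_one (f : MvPolynomial (Fin n) κ) (i : Fin n) :
    (xiOp 1 f i ^ p) 1 = pderiv i f ^ p := by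
  have hp : p ≠ 0 := (Fact.out : p.Prime).ne_zero
  obtain ⟨h1, h2, h3, h4⟩ := hSeq_top f i p
  have ht : tSeq f ((dSeq f i)^[p] oneSeq) = f • (dSeq f i)^[p] oneSeq := by
    rw [tSeq_iter_comm, ← dSeq_iter_p p]
    congr 1
    funext k
    simp [tSeq, oneSeq]
  have h0 : ∀ k, 0 < k → k < p → (dSeq f i)^[p] oneSeq k = 0 := by
    intro k hk hkp
    obtain ⟨k, rfl⟩ := Nat.exists_eq_succ_of_ne_zero hk.ne'
    have := congrFun ht k
    simp only [tSeq, Pi.smul_apply, smul_eq_mul, add_eq_right] at this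
    rcases mul_eq_zero.1 this with h | h
    · exfalso
      rw [CharP.cast_eq_zero_iff _ p] at h
      exact absurd (Nat.le_of_dvd (by omega) h) (by omega)
    · exact h
  rw [h4, Finset.sum_range_succ, h1, Finset.sum_eq_zero, zero_add]
  intro k hk
  rw [Finset.mem_range] at hk
  rcases Nat.eq_zero_or_pos k with rfl | hk0
  · exact h3 (Nat.pos_of_ne_zero hp)
  · exact h0 k hk0 hk

theorem rho_pow_p_comm (f : MvPolynomial (Fin n) κ) (ε : κ) (q v w) :
    rho ε f (q ^ p) (v * w) = v * rho ε f (q ^ p) w := by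
  induction v using MvPolynomial.induction_on generalizing w with
  | C a => rw [← smul_eq_C_mul, ← smul_eq_C_mul, map_smul]
  | add a b ha hb => rw [add_mul, map_add, ha, hb, add_mul]
  | mul_X a i ha =>
    rw [mul_assoc, ha, mul_assoc, X_mul_rho]
    have : pderiv i (q ^ p) = 0 := by
      rw [Derivation.leibniz_pow]; simp
    rw [this, map_zero, LinearMap.zero_apply, smul_zero, sub_zero]

theorem rho_X_pow_p (f : MvPolynomial (Fin n) κ) (i v) :
    rho 1 f (X i ^ p) v = pderiv i f ^ p * v := by
  have := rho_pow_p_comm p f 1 (X i) v 1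
  rw [mul_one] at this
  rw [this, map_pow, rho_X, xiOp_pow_p_one, mul_comm]

theorem rho_frob (f : MvPolynomial (Fin n) κ) (α : Fin n →₀ ℕ) (v) :
    rho 1 f (monomial (p • α) 1) v = (rho 0 f (monomial α 1) 1) ^ p * v := by
  induction α using Finsupp.induction_linear generalizing v with
  | zero =>
    have h := fun ε w => rho_C ε f (1 : κ) w
    simp only [smul_zero]
    rw [show (monomial 0 1 : MvPolynomial (Fin n) κ) = C 1 from rfl, h, h]; simp
  | add a b ha hb =>
    have h1 : ∀ a b : Fin n →₀ ℕ, (monomial (a + b) 1 : MvPolynomial (Fin n) κ) =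
        monomial a 1 * monomial b 1 := fun a b => by rw [monomial_mul, one_mul]
    rw [smul_add, h1, h1, rho_mul_apply, ha, hb,
      rho_zero_eps, rho_zero_eps, rho_zero_eps, map_mul (aeval _)]
    ring
  | single i k =>
    have h1 : ∀ m, (monomial (Finsupp.single i m) 1 : MvPolynomial (Fin n) κ) = X i ^ m :=
      fun m => X_pow_eq_monomial.symm
    rw [Finsupp.smul_single, h1, h1, smul_eq_mul, rho_zero_eps, map_pow (aeval _), aeval_X, mul_one]
    clear h1
    induction k generalizing v with
    | zero => rw [mul_zero, pow_zero, map_one]; simp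
    | succ k ih => rw [mul_add, mul_one, pow_add, rho_mul_apply, rho_X_pow_p p, ih]; ring

theorem eMon_frob (f : MvPolynomial (Fin n) κ) (γ : Expo n) :
    (eMon 0 f γ) ^ p = eMon 1 f (p • γ) := by
  unfold eMon
  simp only [Prod.smul_fst, Prod.smul_snd]
  rw [rho_frob, rho_zero_eps, rho_zero_eps, mul_one, mul_pow, monomial_pow, one_pow]
end Frob

end Part3

section Part4

section Arith

theorem isJacobsonRing_int' : IsJacobsonRing ℤ := by
  rw [isJacobsonRing_iff_prime_eq]
  intro P hP
  by_cases h : P = ⊥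
  · subst h
    rw [eq_bot_iff]
    intro x hx
    rw [Ideal.mem_jacobson_bot] at hx
    have h1 := hx x
    rw [Int.isUnit_iff] at h1
    rw [Ideal.mem_bot]
    rcases h1 with h1 | h1 <;> nlinarith [mul_self_nonneg x]
  · have := IsPrime.to_maximal_ideal h
    exact Ideal.jacobson_eq_self_of_isMaximal

theorem field_finiteType_int {A : Type*} [CommRing A] (hA : Algebra.FiniteType ℤ A)
    (κ : Type*) [Field κ] (g : A →+* κ) (hg : Function.Surjective g) :
    ∃ p : ℕ, p.Prime ∧ CharP κ p ∧ Finite κ := by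
  have : Algebra.FiniteType ℤ κ := Algebra.FiniteType.of_surjective g.toIntAlgHom hg
  have := isJacobsonRing_int'
  have hfin : Module.Finite ℤ κ := finite_of_finite_type_of_isJacobsonRing ℤ κ
  rcases CharP.exists' κ with h0 | ⟨p, hp, hc⟩
  · exfalso
    have hinj : Function.Injective (algebraMap ℤ κ) := by
      rw [algebraMap_int_eq]; exact Int.cast_injective
    exact Int.not_isField (isField_of_isIntegral_of_isField hinj (Field.toIsField κ))
  · refine ⟨p, hp.out, hc, ?_⟩
    letI := ZMod.algebra κ p
    have : IsScalarTower ℤ (ZMod p) κ := IsScalarTower.of_algebraMap_eq' (RingHom.ext_int _ _)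
    have : Module.Finite (ZMod p) κ := Module.Finite.of_restrictScalars_finite ℤ (ZMod p) κ
    exact Module.finite_of_finite (ZMod p)

universe uA in
theorem exists_residue {A : Type uA} [CommRing A] (M : Ideal A) (hM : M.IsMaximal) :
    ∃ (κ : Type uA) (_ : Field κ) (q : A →+* κ), Function.Surjective q ∧ RingHom.ker q = M :=
  ⟨A ⧸ M, Ideal.Quotient.field M, Ideal.Quotient.mk M, Ideal.Quotient.mk_surjective,
    Ideal.mk_ker⟩

end Arith

section ThmA
variable {n : ℕ} {Λ K : Type*} [CommRing Λ]

theorem homComp_X_mul (i : Fin n) (j : ℕ) (c : MvPolynomial (Fin n) Λ) :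
    homogeneousComponent (j + 1) (X i * c) = X i * homogeneousComponent j c := by
  ext d
  rw [coeff_homogeneousComponent, coeff_X_mul', coeff_X_mul', coeff_homogeneousComponent]
  by_cases h : i ∈ d.support
  · simp only [h, if_true]
    have h1 : d.degree = (d - Finsupp.single i 1).degree + 1 := by
      conv_lhs => rw [← tsub_add_cancel_of_le (show Finsupp.single i 1 ≤ d by
        rw [Finsupp.single_le_iff]; have := Finsupp.mem_support_iff.1 h; omega)]
      rw [map_add]; simp
    simp [h1]
  · simp [h]

/-- the ideal of leading forms of `E` -/
def J0 (f : MvPolynomial (Fin n) Λ) : Ideal (MvPolynomial (Fin n) Λ) where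
  carrier := {c | ∀ j, homogeneousComponent j c ∈ eSpan 1 f (EE n j)}
  add_mem' := fun ha hb j => by rw [map_add]; exact add_mem (ha j) (hb j)
  zero_mem' := fun j => by simp
  smul_mem' := by
    intro r c hc
    rw [smul_eq_mul]
    induction r using MvPolynomial.induction_on generalizing c with
    | C a => intro j; rw [homogeneousComponent_C_mul, ← smul_eq_C_mul]; exact Submodule.smul_mem _ _ (hc j)
    | add a b ha hb => intro j; rw [add_mul, map_add]; exact add_mem (ha hc j) (hb hc j)
    | mul_X a i ha =>
      rw [mul_assoc]
      apply ha
      intro j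
      cases j with
      | zero => 
        rw [homogeneousComponent_zero, coeff_X_mul', if_neg (by simp), map_zero]; exact zero_mem _
      | succ j => rw [homComp_X_mul]; exact X_mul_EE _ _ _ _ (hc j)

theorem mem_J0_of_homogeneous (f c : MvPolynomial (Fin n) Λ) (a : ℕ) (hc : c.IsHomogeneous a) :
    c ∈ J0 f ↔ c ∈ eSpan 1 f (EE n a) := by
  constructor
  · intro h
    have := h a
    rwa [homogeneousComponent_eq_self hc] at this
  · intro h j
    rw [homogeneousComponent_of_mem hc]
    split_ifs with h1
    · subst h1; exact h
    · simp

theorem thmA_core [Field K] [Algebra.FiniteType ℤ Λ] (φ : Λ →+* K) (hφ : Function.Injective φ)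
    (f : MvPolynomial (Fin n) Λ) (hT : ∀ γ, Nonstd (φ 1) (map φ f) γ → Nonstd 1 f γ)
    (i : Fin n) (N : ℕ) (hE : X i ^ N ∈ eSpan 0 f (EE n N)) :
    ∃ a, X i ^ a ∈ eSpan 1 f (EE n a) := by
  have := isJacobsonRing_int'
  have hΛ : IsJacobsonRing Λ := isJacobsonRing_of_finiteType (A := ℤ)
  suffices h : (X i : MvPolynomial (Fin n) Λ) ∈ (J0 f).radical by
    obtain ⟨a, ha⟩ := h
    exact ⟨a, (mem_J0_of_homogeneous f _ a (isHomogeneous_X_pow i a)).1 ha⟩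
  rw [Ideal.radical_eq_jacobson, Ideal.jacobson, Submodule.mem_sInf]
  rintro (M : Ideal _) ⟨hJM, hM⟩
  obtain ⟨κ, _, Q, hQs, hQ⟩ := exists_residue M hM
  have hft : Algebra.FiniteType ℤ (MvPolynomial (Fin n) Λ) :=
    Algebra.FiniteType.trans (S := Λ) inferInstance inferInstance
  obtain ⟨p, hp, hc, -⟩ := field_finiteType_int hft κ Q hQs
  haveI : Fact p.Prime := ⟨hp⟩
  let ψ : Λ →+* κ := Q.comp C
  obtain ⟨c, hcs, hceq⟩ := mem_eSpan_iff.1 hE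
  -- the `p`-th power of the relation, lifted
  set g : MvPolynomial (Fin n) Λ := c.sum fun γ a => a ^ p • eMon 1 f (p • γ) with hg
  have hgE : g ∈ eSpan 1 f (EE n (p * N)) := by
    refine sum_mem fun γ hγ => Submodule.smul_mem _ _ (eMon_mem _ _ ?_)
    have hp0 := hp.pos
    rcases hcs γ hγ with h | ⟨h1, h2⟩
    · left; simp only [Prod.smul_snd, map_nsmul, smul_eq_mul]; exact Nat.mul_lt_mul_of_pos_left h hp0
    · right; simp only [Prod.smul_snd, Prod.smul_fst, map_nsmul, smul_eq_mul]
      refine ⟨?_, Nat.mul_le_mul_left p h2⟩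
      intro h0
      rw [smul_eq_zero] at h0
      exact h0.elim hp.ne_zero h1
  have hmap : map ψ (X i ^ (p * N) - g) = 0 := by
    have h1 := congrArg (fun v => (map ψ v) ^ p) hceq
    simp only [map_pow, map_X, Finsupp.sum, map_sum] at h1
    rw [sum_pow_char] at h1
    rw [map_sub, map_pow, map_X, mul_comm, pow_mul, h1, sub_eq_zero, hg, Finsupp.sum, map_sum]
    refine Finset.sum_congr rfl fun γ _ => ?_
    rw [smul_eq_C_mul, smul_eq_C_mul, map_mul, map_mul, map_C, map_C, eMon_map, eMon_map, mul_pow,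
      map_zero, map_one, eMon_frob, map_pow, map_pow]
  have hXF : X i ^ (p * N) ∈ eSpan 1 f (FE n (p * N)) := by
    rw [X_pow_eq_monomial, ← eMon_zero_left 1 f]
    exact eMon_mem _ _ (show (Finsupp.single i (p * N)).degree ≤ p * N from
      le_of_eq (Finsupp.degree_single _ _))
  obtain ⟨d, hd, hdI, hdeq⟩ := groebner_saturated φ 1 f hφ hT (RingHom.ker ψ) (p * N)
    (X i ^ (p * N) - g) (sub_mem hXF (eSpan_mono _ _ (EE_sub_FE _) hgE)) (by
      intro β
      rw [RingHom.mem_ker, ← coeff_map, hmap, coeff_zero])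
  -- split `d`
  classical
  set π : MvPolynomial (Fin n) Λ := ∑ γ ∈ d.support.filter (fun γ => γ.1 = 0 ∧ γ.2.degree = p * N),
    d γ • eMon 1 f γ with hπ
  have hπM : π ∈ M := by
    refine sum_mem fun γ _ => ?_
    rw [smul_eq_C_mul]
    refine M.mul_mem_right _ ?_
    have := hdI γ
    rw [RingHom.mem_ker] at this
    rw [← hQ]; exact this
  have hπh : π.IsHomogeneous (p * N) := by
    refine IsHomogeneous.sum _ _ _ fun γ hγ => ?_
    rw [Finset.mem_filter] at hγ
    have : γ = (0, γ.2) := Prod.ext hγ.2.1 rfl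
    rw [this, eMon_zero_left, smul_monomial]
    exact isHomogeneous_monomial _ hγ.2.2
  have hE' : X i ^ (p * N) - π ∈ eSpan 1 f (EE n (p * N)) := by
    have h1 : X i ^ (p * N) - π = g +
      ∑ γ ∈ d.support.filter (fun γ => ¬ (γ.1 = 0 ∧ γ.2.degree = p * N)), d γ • eMon 1 f γ := by
      have h2 : X i ^ (p * N) = g + (X i ^ (p * N) - g) := by ring
      rw [h2, hdeq, Finsupp.sum, ← Finset.sum_filter_add_sum_filter_not d.support
        (fun γ => γ.1 = 0 ∧ γ.2.degree = p * N)]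
      ring
    rw [h1]
    refine add_mem hgE (sum_mem fun γ hγ => Submodule.smul_mem _ _ (eMon_mem _ _ ?_))
    rw [Finset.mem_filter] at hγ
    have h3 : γ.2.degree ≤ p * N := hd γ hγ.1
    rcases lt_or_eq_of_le h3 with h4 | h4
    · exact Or.inl h4
    · exact Or.inr ⟨fun h => hγ.2 ⟨h, h4⟩, h3⟩
  have hJ := (mem_J0_of_homogeneous f _ _ ((isHomogeneous_X_pow i (p * N)).sub hπh)).2 hE'
  have h5 := add_mem (hJM hJ) hπM
  rw [sub_add_cancel] at h5
  exact hM.isPrime.mem_of_pow_mem _ h5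

end ThmA

section Descent
variable {n : ℕ} {Λ K : Type*} [CommRing Λ] [CommRing K]

theorem eSpan_descend (φ : Λ →+* K) (hφ : Function.Injective φ) (ε : Λ)
    (f v : MvPolynomial (Fin n) Λ) (A : Set (Expo n)) (c : Expo n →₀ K)
    (hc : ∀ γ ∈ c.support, γ ∈ A) (hr : ∀ γ ∈ c.support, c γ ∈ φ.range)
    (h : map φ v = c.sum fun γ a => a • eMon (φ ε) (map φ f) γ) : v ∈ eSpan ε f A := by
  choose! c' hc' using hr
  have : v = ∑ γ ∈ c.support, c' γ • eMon ε f γ := by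
    apply map_injective φ hφ
    rw [h, map_sum, Finsupp.sum]
    refine Finset.sum_congr rfl fun γ hγ => ?_
    rw [smul_eq_C_mul (eMon ε f γ), map_mul, map_C, eMon_map, ← smul_eq_C_mul, hc' γ hγ]
  rw [this]
  exact sum_mem fun γ hγ => Submodule.smul_mem _ _ (eMon_mem _ _ (hc γ hγ))

/-- the subring generated by a finite set -/
theorem exists_fg_subring (T : Set ℂ) (hT : T.Finite) :
    ∃ (Λ : Type) (_ : CommRing Λ) (φ : Λ →+* ℂ), Function.Injective φ ∧
      Algebra.FiniteType ℤ Λ ∧ ∀ t ∈ T, t ∈ φ.range := by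
  refine ⟨Algebra.adjoin ℤ T, inferInstance, (Algebra.adjoin ℤ T).val.toRingHom,
    Subtype.val_injective, ?_, ?_⟩
  · exact (Subalgebra.fg_iff_finiteType _).1 ⟨hT.toFinset, by simp⟩
  · intro t ht
    exact ⟨⟨t, Algebra.subset_adjoin ht⟩, rfl⟩

theorem exists_descend_poly (φ : Λ →+* K) (f : MvPolynomial (Fin n) K)
    (h : ∀ β, coeff β f ∈ φ.range) : ∃ f', map φ f' = f := by
  choose c hc using h
  refine ⟨∑ β ∈ f.support, monomial β (c β), ?_⟩
  rw [map_sum]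
  conv_rhs => rw [f.as_sum]
  refine Finset.sum_congr rfl fun β _ => ?_
  rw [map_monomial, hc]

theorem thmA (f : MvPolynomial (Fin n) ℂ)
    (hE : ∀ i : Fin n, ∃ a, X i ^ a ∈ eSpan 0 f (EE n a)) (i : Fin n) :
    ∃ a, X i ^ a ∈ eSpan 1 f (EE n a) := by
  obtain ⟨N, hN⟩ := hE i
  obtain ⟨c, hc, hceq⟩ := mem_eSpan_iff.1 hN
  obtain ⟨T, hTf, hTs, hT⟩ := exists_finite_minimal {γ | Nonstd 1 f γ}
  have h1 : ∀ t ∈ T, ∃ d : Expo n →₀ ℂ, (∀ γ ∈ d.support, γ ∈ {γ' | gkey γ' < gkey t}) ∧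
      eMon 1 f t = d.sum fun γ a => a • eMon 1 f γ := fun t ht => mem_eSpan_iff.1 (hTs ht)
  choose! d hd hdeq using h1
  obtain ⟨Λ, _, φ, hφ, hft, hr⟩ := exists_fg_subring
    ((fun β => coeff β f) '' (f.support : Set (Fin n →₀ ℕ)) ∪ c '' (c.support : Set (Expo n)) ∪
      ⋃ t ∈ T, (d t) '' ((d t).support : Set (Expo n)))
    (((Finset.finite_toSet _).image _).union ((Finset.finite_toSet _).image _) |>.union
      (hTf.biUnion fun t _ => (Finset.finite_toSet _).image _))
  obtain ⟨f', rfl⟩ := exists_descend_poly φ f (fun β => by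
    by_cases h : β ∈ f.support
    · exact hr _ (Or.inl (Or.inl ⟨β, h, rfl⟩))
    · rw [notMem_support_iff.1 h]; exact zero_mem _)
  have hN' : X i ^ N ∈ eSpan 0 f' (EE n N) := by
    refine eSpan_descend φ hφ 0 f' _ _ c hc (fun γ h => hr _ (Or.inl (Or.inr ⟨γ, h, rfl⟩))) ?_
    rw [map_pow, map_X, map_zero]; exact hceq
  obtain ⟨a, ha⟩ := thmA_core φ hφ f' (by
    intro γ hγ
    rw [map_one] at hγ
    obtain ⟨t, ht, hle⟩ := hT γ hγ
    refine Nonstd.of_le ?_ hle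
    refine eSpan_descend φ hφ 1 f' _ _ (d t) (hd t ht)
      (fun γ h => hr _ (Or.inr (Set.mem_biUnion ht ⟨γ, h, rfl⟩))) ?_
    rw [eMon_map, map_one]
    exact hdeq t ht) i N hN'
  refine ⟨a, ?_⟩
  have := eSpan_map φ 1 f' ha
  rwa [map_pow, map_X, map_one] at this

end Descent

end Part4

section Part5

section Density

/-- Nullstellensatz: maximal ideals are points. -/
theorem exists_point {A : Type*} [CommRing A] [Algebra ℂ A] [Algebra.FiniteType ℂ A]
    (Q : Ideal A) (hQ : Q.IsMaximal) : ∃ v : A →ₐ[ℂ] ℂ, ∀ a, v a = 0 ↔ a ∈ Q := by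
  letI : Field (A ⧸ Q) := Ideal.Quotient.field Q
  haveI : Algebra.FiniteType ℂ (A ⧸ Q) :=
    Algebra.FiniteType.of_surjective (Ideal.Quotient.mkₐ ℂ Q) (Ideal.Quotient.mkₐ_surjective ℂ Q)
  haveI : Module.Finite ℂ (A ⧸ Q) := finite_of_finite_type_of_isJacobsonRing ℂ (A ⧸ Q)
  have hb := IsAlgClosed.algebraMap_bijective_of_isIntegral (k := ℂ) (K := A ⧸ Q)
  let e : ℂ ≃ₐ[ℂ] (A ⧸ Q) := AlgEquiv.ofBijective (Algebra.ofId ℂ (A ⧸ Q)) hb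
  refine ⟨e.symm.toAlgHom.comp (Ideal.Quotient.mkₐ ℂ Q), fun a => ?_⟩
  have : e.symm.toAlgHom.comp (Ideal.Quotient.mkₐ ℂ Q) a = e.symm (Ideal.Quotient.mk Q a) := rfl
  rw [this, ← Ideal.Quotient.eq_zero_iff_mem, EmbeddingLike.map_eq_zero_iff]

theorem exists_small_root (p : Polynomial ℂ) (hm : p.Monic) (η : ℝ) (hη : 0 < η)
    (h : ‖p.coeff 0‖ < η ^ p.natDegree) : ∃ τ, p.IsRoot τ ∧ ‖τ‖ < η := by
  by_contra! hc
  have hs := IsAlgClosed.splits p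
  have h1 := hs.coeff_zero_eq_prod_roots_of_monic hm
  have h2 : ‖p.coeff 0‖ = (p.roots.map fun x => ‖x‖).prod := by
    rw [h1]; simp only [norm_mul, norm_pow, norm_neg, norm_one, one_pow, one_mul]
    exact map_multiset_prod (normHom : ℂ →*₀ ℝ) _
  have key : ∀ s : Multiset ℂ, (∀ x ∈ s, η ≤ ‖x‖) → η ^ s.card ≤ (s.map fun x => ‖x‖).prod := by
    intro s
    induction s using Multiset.induction with
    | empty => simp
    | cons a s ih =>
      intro h
      simp only [Multiset.card_cons, Multiset.map_cons, Multiset.prod_cons, pow_succ']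
      have := h a (Multiset.mem_cons_self _ _)
      have := ih fun x hx => h x (Multiset.mem_cons_of_mem hx)
      gcongr
  have h3 := key p.roots fun x hx => hc x (Polynomial.isRoot_of_mem_roots hx)
  rw [← h2, ← hs.natDegree_eq_card_roots] at h3
  linarith

theorem root_norm_le (p : Polynomial ℂ) (hm : p.Monic) (z : ℂ) (hz : p.IsRoot z) :
    ‖z‖ ≤ ∑ i ∈ Finset.range p.natDegree, ‖p.coeff i‖ + 1 := by
  have h := (Polynomial.IsRoot.norm_lt_cauchyBound hm.ne_zero hz).le
  have h2 : Polynomial.cauchyBound p ≤ ∑ i ∈ Finset.range p.natDegree, ‖p.coeff i‖₊ + 1 := by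
    unfold Polynomial.cauchyBound
    rw [hm.leadingCoeff]
    simp only [nnnorm_one, div_one]
    gcongr
    refine Finset.sup_le fun i hi => ?_
    exact Finset.single_le_sum (f := fun i => ‖p.coeff i‖₊) (fun _ _ => zero_le) hi
  have h3 := h.trans h2
  have h4 : ((‖z‖₊ : NNReal) : ℝ) ≤ ((∑ i ∈ Finset.range p.natDegree, ‖p.coeff i‖₊ + 1 : NNReal) : ℝ) :=
    NNReal.coe_le_coe.2 h3
  simpa using h4

variable {d : ℕ} {A : Type*} [CommRing A] [IsDomain A] [Algebra ℂ A]
  [Algebra (MvPolynomial (Fin d) ℂ) A] [IsScalarTower ℂ (MvPolynomial (Fin d) ℂ) A]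

/-- evaluation of `v(χ(a))` -/
theorem point_root (v : A →ₐ[ℂ] ℂ) (u : Fin d → ℂ)
    (hu : ∀ p : MvPolynomial (Fin d) ℂ, v (algebraMap _ A p) = eval u p) (a : A)
    (χ : Polynomial (MvPolynomial (Fin d) ℂ)) :
    v (Polynomial.aeval a χ) = (χ.map (eval u)).eval (v a) := by
  rw [Polynomial.aeval_def, Polynomial.eval_map, Polynomial.eval₂_eq_sum_range,
    Polynomial.eval₂_eq_sum_range, map_sum]
  simp [hu]

theorem exists_point_over [Algebra.FiniteType ℂ A]
    [Algebra.IsIntegral (MvPolynomial (Fin d) ℂ) A]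
    (hinj : Function.Injective (algebraMap (MvPolynomial (Fin d) ℂ) A))
    (θ : A) (u : Fin d → ℂ) (τ : ℂ)
    (hτ : ((minpoly (MvPolynomial (Fin d) ℂ) θ).map (eval u)).IsRoot τ) :
    ∃ v : A →ₐ[ℂ] ℂ, (∀ p : MvPolynomial (Fin d) ℂ, v (algebraMap _ A p) = eval u p) ∧
      v θ = τ := by
  haveI : FaithfulSMul (MvPolynomial (Fin d) ℂ) A :=
    (faithfulSMul_iff_algebraMap_injective _ _).2 hinj
  haveI : Module.IsTorsionFree (MvPolynomial (Fin d) ℂ) A := by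
    infer_instance
  letI : Algebra (Polynomial (MvPolynomial (Fin d) ℂ)) A :=
    (Polynomial.aeval θ).toRingHom.toAlgebra
  have hal : ∀ q : Polynomial (MvPolynomial (Fin d) ℂ), algebraMap _ A q = Polynomial.aeval θ q :=
    fun q => rfl
  haveI : IsScalarTower (MvPolynomial (Fin d) ℂ) (Polynomial (MvPolynomial (Fin d) ℂ)) A :=
    IsScalarTower.of_algebraMap_eq fun p => by
      rw [hal, Polynomial.algebraMap_eq, Polynomial.aeval_C]
  haveI : Algebra.IsIntegral (Polynomial (MvPolynomial (Fin d) ℂ)) A :=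
    Algebra.IsIntegral.tower_top (R := MvPolynomial (Fin d) ℂ)
  let ψ : Polynomial (MvPolynomial (Fin d) ℂ) →+* ℂ := Polynomial.eval₂RingHom (eval u) τ
  have hψ : Function.Surjective ψ := fun c => ⟨Polynomial.C (C c), by simp [ψ]⟩
  haveI hmax : (RingHom.ker ψ).IsMaximal := RingHom.ker_isMaximal_of_surjective ψ hψ
  have hker : RingHom.ker (algebraMap (Polynomial (MvPolynomial (Fin d) ℂ)) A) ≤ RingHom.ker ψ := by
    intro q hq
    rw [RingHom.mem_ker, hal] at hq
    obtain ⟨r, rfl⟩ := minpoly.isIntegrallyClosed_dvd (Algebra.IsIntegral.isIntegral θ) hq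
    rw [RingHom.mem_ker, map_mul]
    have : ψ (minpoly (MvPolynomial (Fin d) ℂ) θ) = 0 := by
      rw [Polynomial.IsRoot, Polynomial.eval_map] at hτ
      exact hτ
    rw [this, zero_mul]
  obtain ⟨Q, hQ, hQc⟩ := Ideal.exists_ideal_over_maximal_of_isIntegral (S := A) (RingHom.ker ψ) hker
  obtain ⟨v, hv⟩ := exists_point Q hQ
  have hz : ∀ q, ψ q = 0 → v (Polynomial.aeval θ q) = 0 := by
    intro q hq
    rw [hv, ← hal, ← Ideal.mem_comap, hQc]; exact hq
  have hCC : ∀ c : ℂ, algebraMap (MvPolynomial (Fin d) ℂ) A (C c) = algebraMap ℂ A c := by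
    intro c
    rw [IsScalarTower.algebraMap_apply ℂ (MvPolynomial (Fin d) ℂ) A]; rfl
  refine ⟨v, fun p => ?_, ?_⟩
  · have := hz (Polynomial.C (p - C (eval u p))) (by simp [ψ])
    rw [Polynomial.aeval_C, map_sub, map_sub, hCC, AlgHom.commutes, sub_eq_zero] at this
    simpa using this
  · have := hz (Polynomial.X - Polynomial.C (C τ)) (by simp [ψ])
    rw [map_sub, Polynomial.aeval_C, Polynomial.aeval_X, map_sub, hCC, AlgHom.commutes,
      sub_eq_zero] at this
    simpa using this

end Density

end Part5

section Part6

section Density2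
variable {d : ℕ} {A : Type*} [CommRing A] [IsDomain A] [Algebra ℂ A]
  [Algebra (MvPolynomial (Fin d) ℂ) A] [IsScalarTower ℂ (MvPolynomial (Fin d) ℂ) A]

/-- ultrafilter limits of points -/
theorem exists_limit_point 
    [Algebra.IsIntegral (MvPolynomial (Fin d) ℂ) A] (F : Ultrafilter ℕ)
    (w : Fin d → ℂ) (u : ℕ → Fin d → ℂ) (hu : Filter.Tendsto u F (nhds w))
    (v : ℕ → A →ₐ[ℂ] ℂ)
    (hv : ∀ k (p : MvPolynomial (Fin d) ℂ), v k (algebraMap _ A p) = eval (u k) p) :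
    ∃ v' : A →ₐ[ℂ] ℂ, (∀ a, Filter.Tendsto (fun k => v k a) F (nhds (v' a))) ∧
      ∀ p : MvPolynomial (Fin d) ℂ, v' (algebraMap _ A p) = eval w p := by
  have hlim : ∀ a, ∃ l : ℂ, Filter.Tendsto (fun k => v k a) F (nhds l) := by
    intro a
    obtain ⟨χ, hχ, hχa⟩ := Algebra.IsIntegral.isIntegral (R := MvPolynomial (Fin d) ℂ) a
    have hb : ∀ k, ‖v k a‖ ≤ ∑ i ∈ Finset.range χ.natDegree, ‖eval (u k) (χ.coeff i)‖ + 1 := by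
      intro k
      have h1 := root_norm_le (χ.map (eval (u k))) (hχ.map _) (v k a) (by
        rw [Polynomial.IsRoot, ← point_root (v k) (u k) (hv k), Polynomial.aeval_def, hχa, map_zero])
      rw [hχ.natDegree_map] at h1
      simpa using h1
    have hcont : Continuous fun x : Fin d → ℂ =>
        ∑ i ∈ Finset.range χ.natDegree, ‖eval x (χ.coeff i)‖ + 1 := by
      refine Continuous.add (continuous_finsetSum _ fun i _ => ?_) continuous_const
      exact (MvPolynomial.continuous_eval _).norm
    have ht := (hcont.tendsto w).comp hu
    set B := ∑ i ∈ Finset.range χ.natDegree, ‖eval w (χ.coeff i)‖ + 1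
    have hev : ∀ᶠ k in (F : Filter ℕ), v k a ∈ Metric.closedBall (0 : ℂ) (B + 1) := by
      filter_upwards [ht.eventually (gt_mem_nhds (lt_add_one B))] with k hk
      rw [mem_closedBall_zero_iff]
      exact (hb k).trans hk.le
    have hc : IsCompact (Metric.closedBall (0 : ℂ) (B + 1)) := isCompact_closedBall _ _
    obtain ⟨l, -, hl⟩ := hc.ultrafilter_le_nhds (F.map fun k => v k a) (by
      rw [Filter.le_principal_iff]; exact hev)
    exact ⟨l, hl⟩
  choose l hl using hlim
  refine ⟨AlgHom.ofLinearMap { toFun := l, map_add' := ?_, map_smul' := ?_ } ?_ ?_, hl, ?_⟩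
  · intro a b
    refine tendsto_nhds_unique (hl (a + b)) ?_
    simpa using (hl a).add (hl b)
  · intro c a
    refine tendsto_nhds_unique (hl (c • a)) ?_
    simpa using (hl a).const_mul c
  · refine tendsto_nhds_unique (hl 1) ?_
    simp
  · intro a b
    refine tendsto_nhds_unique (hl (a * b)) ?_
    simpa using (hl a).mul (hl b)
  · intro p
    refine tendsto_nhds_unique (hl (algebraMap _ A p)) ?_
    simp only [hv]
    exact ((MvPolynomial.continuous_eval p).tendsto w).comp hu

theorem exists_near_ne (N : MvPolynomial (Fin d) ℂ) (hN : N ≠ 0) (w : Fin d → ℂ)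
    (U : Set (Fin d → ℂ)) (hU : U ∈ nhds w) : ∃ u ∈ U, eval u N ≠ 0 := by
  obtain ⟨r, hr, hrU⟩ := Metric.mem_nhds_iff.1 hU
  by_contra! hc
  apply hN
  apply MvPolynomial.funext_set (fun i => Metric.ball (w i) r)
  · intro i
    have h0 : (Metric.ball (w i) r) ∈ nhds (w i) := Metric.ball_mem_nhds _ hr
    exact infinite_of_mem_nhds (w i) h0
  · intro x hx
    rw [map_zero]
    apply hc
    apply hrU
    rw [Metric.mem_ball, dist_pi_lt_iff hr]
    intro i
    exact hx i (Set.mem_univ _)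

theorem density_core [Algebra.FiniteType ℂ A]
    [Algebra.IsIntegral (MvPolynomial (Fin d) ℂ) A]
    (hinj : Function.Injective (algebraMap (MvPolynomial (Fin d) ℂ) A))
    (v₀ : A →ₐ[ℂ] ℂ) (g : A) (hg : g ≠ 0) (S : Finset A) (r : ℝ) (hr : 0 < r) :
    ∃ v : A →ₐ[ℂ] ℂ, (∀ a ∈ S, ‖v a - v₀ a‖ < r) ∧ v g ≠ 0 := by
  classical
  haveI : FaithfulSMul (MvPolynomial (Fin d) ℂ) A :=
    (faithfulSMul_iff_algebraMap_injective _ _).2 hinj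
  haveI : Module.IsTorsionFree (MvPolynomial (Fin d) ℂ) A := by
    infer_instance
  have hCC : ∀ c : ℂ, algebraMap (MvPolynomial (Fin d) ℂ) A (C c) = algebraMap ℂ A c := by
    intro c
    rw [IsScalarTower.algebraMap_apply ℂ (MvPolynomial (Fin d) ℂ) A]; rfl
  let w : Fin d → ℂ := fun i => v₀ (algebraMap (MvPolynomial (Fin d) ℂ) A (X i))
  have hw : ∀ p : MvPolynomial (Fin d) ℂ, v₀ (algebraMap _ A p) = eval w p := by
    intro p
    induction p using MvPolynomial.induction_on with
    | C c => rw [hCC, AlgHom.commutes]; simp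
    | add p q hp hq => simp only [map_add, hp, hq]
    | mul_X p i hp => simp only [map_mul, hp, eval_X, w]
  -- the fiber
  let Fib : Set (A →ₐ[ℂ] ℂ) := {v | ∀ p : MvPolynomial (Fin d) ℂ, v (algebraMap _ A p) = eval w p}
  have hfin : Fib.Finite := by
    obtain ⟨G, hG⟩ := (inferInstance : Algebra.FiniteType ℂ A).out
    have hχ : ∀ a : A, ∃ T : Set ℂ, T.Finite ∧ ∀ v ∈ Fib, v a ∈ T := by
      intro a
      obtain ⟨χ, hχ, hχa⟩ := Algebra.IsIntegral.isIntegral (R := MvPolynomial (Fin d) ℂ) a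
      refine ⟨(χ.map (eval w)).rootSet ℂ, Polynomial.rootSet_finite _ _, fun v hv => ?_⟩
      rw [Polynomial.mem_rootSet]
      refine ⟨(hχ.map _).ne_zero, ?_⟩
      rw [Polynomial.coe_aeval_eq_eval, ← point_root v w hv, Polynomial.aeval_def, hχa, map_zero]
    choose T hT hTv using hχ
    have hpi : (Set.univ.pi fun a : G => T a).Finite := Set.Finite.pi fun a => hT a
    refine Set.Finite.of_finite_image (f := fun v (a : G) => v a) (hpi.subset ?_) ?_
    · rintro _ ⟨v, hv, rfl⟩ a -
      exact hTv a v hv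
    · intro v hv v' hv' h
      refine AlgHom.ext_of_adjoin_eq_top hG ?_
      intro a ha
      exact congrFun h ⟨a, ha⟩
  -- separating element
  have hsep : ∃ θ : A, v₀ θ = 0 ∧ ∀ v ∈ Fib, v θ = 0 → v = v₀ := by
    have : ∀ v : A →ₐ[ℂ] ℂ, ∃ a, v₀ a ≠ 0 ∧ (v ≠ v₀ → v a = 0) := by
      intro v
      by_cases h : v = v₀
      · exact ⟨1, by simp, fun h' => (h' h).elim⟩
      · obtain ⟨a, ha⟩ := DFunLike.ne_iff.1 h
        refine ⟨a - algebraMap ℂ A (v a), ?_, fun _ => by simp⟩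
        simpa [sub_eq_zero] using fun h => ha h.symm
    choose s hs0 hs using this
    let t := ∏ v ∈ hfin.toFinset, s v
    have ht0 : v₀ t ≠ 0 := by
      rw [map_prod]
      exact Finset.prod_ne_zero_iff.2 fun v _ => hs0 v
    refine ⟨t - algebraMap ℂ A (v₀ t), by simp, fun v hv h => ?_⟩
    by_contra hne
    have h1 : v t = 0 := by
      rw [map_prod]
      exact Finset.prod_eq_zero (hfin.mem_toFinset.2 hv) (hs v hne)
    rw [map_sub, h1, AlgHom.commutes, zero_sub, neg_eq_zero] at h
    exact ht0 h
  obtain ⟨θ, hθ0, hθ⟩ := hsep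
  set χ := minpoly (MvPolynomial (Fin d) ℂ) θ with hχdef
  have hθi : IsIntegral (MvPolynomial (Fin d) ℂ) θ := Algebra.IsIntegral.isIntegral θ
  have hχm : χ.Monic := minpoly.monic hθi
  have hc0 : eval w (χ.coeff 0) = 0 := by
    have := point_root v₀ w hw θ χ
    rw [minpoly.aeval, map_zero, hθ0, ← Polynomial.coeff_zero_eq_eval_zero, Polynomial.coeff_map] at this
    exact this.symm
  -- multiple of `g`
  obtain ⟨N, hN0, hNg⟩ : ∃ N : MvPolynomial (Fin d) ℂ, N ≠ 0 ∧ algebraMap _ A N ∈ Ideal.span {g} := by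
    have := Ideal.comap_ne_bot_of_integral_mem (R := MvPolynomial (Fin d) ℂ) (I := Ideal.span {g}) hg
      (Ideal.mem_span_singleton_self g) (Algebra.IsIntegral.isIntegral g)
    obtain ⟨N, hN, hN0⟩ := Submodule.exists_mem_ne_zero_of_ne_bot this
    exact ⟨N, hN0, hN⟩
  have hseq : ∀ k : ℕ, ∃ (u : Fin d → ℂ) (v : A →ₐ[ℂ] ℂ), dist u w < 1 / ((k : ℝ) + 1) ∧
      (∀ p : MvPolynomial (Fin d) ℂ, v (algebraMap _ A p) = eval u p) ∧
      ‖v θ‖ < 1 / ((k : ℝ) + 1) ∧ v g ≠ 0 := by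
    intro k
    have hη : 0 < 1 / ((k : ℝ) + 1) := by positivity
    have hcont : ∀ᶠ u in nhds w, ‖eval u (χ.coeff 0)‖ < (1 / ((k : ℝ) + 1)) ^ χ.natDegree := by
      have h1 := ((MvPolynomial.continuous_eval (χ.coeff 0)).norm).tendsto w
      rw [hc0, norm_zero] at h1
      exact h1.eventually (gt_mem_nhds (by positivity))
    obtain ⟨u, ⟨hu1, hu2⟩, huN⟩ := exists_near_ne N hN0 w _
      (Filter.inter_mem hcont (Metric.ball_mem_nhds w hη))
    obtain ⟨τ, hτ, hτn⟩ := exists_small_root (χ.map (eval u)) (hχm.map _) _ hη (by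
      rw [hχm.natDegree_map, Polynomial.coeff_map]; exact hu1)
    obtain ⟨v, hv, hvθ⟩ := exists_point_over hinj θ u τ hτ
    refine ⟨u, v, hu2, hv, by rw [hvθ]; exact hτn, fun h => huN ?_⟩
    rw [← hv]
    obtain ⟨b, hb⟩ := Ideal.mem_span_singleton'.1 hNg
    rw [← hb, map_mul, h, mul_zero]
  choose u v hu hv hvθ hvg using hseq
  have h1k : Filter.Tendsto (fun k : ℕ => 1 / ((k : ℝ) + 1)) (Filter.hyperfilter ℕ : Filter ℕ) (nhds 0) :=
    tendsto_one_div_add_atTop_nhds_zero_nat.mono_left Nat.hyperfilter_le_atTop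
  have hut : Filter.Tendsto u (Filter.hyperfilter ℕ : Filter ℕ) (nhds w) := by
    rw [tendsto_iff_dist_tendsto_zero]
    exact squeeze_zero (fun _ => dist_nonneg) (fun k => (hu k).le) h1k
  obtain ⟨v', hv', hv'w⟩ := exists_limit_point (Filter.hyperfilter ℕ) w u hut v hv
  have hv'θ : v' θ = 0 := by
    refine tendsto_nhds_unique (hv' θ) ?_
    exact squeeze_zero_norm (fun k => (hvθ k).le) h1k
  have hvv : v' = v₀ := hθ v' hv'w hv'θ
  subst hvv
  have hev : ∀ᶠ k in (Filter.hyperfilter ℕ : Filter ℕ), ∀ a ∈ S, ‖v k a - v' a‖ < r := by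
    rw [Filter.eventually_all_finset]
    intro a _
    have := (hv' a).eventually (Metric.ball_mem_nhds (v' a) hr)
    filter_upwards [this] with k hk
    rwa [dist_eq_norm] at hk
  obtain ⟨k, hk⟩ := hev.exists
  exact ⟨v k, hk, hvg k⟩

end Density2

theorem density {A : Type*} [CommRing A] [IsDomain A] [Algebra ℂ A] [Algebra.FiniteType ℂ A]
    (v₀ : A →ₐ[ℂ] ℂ) (g : A) (hg : g ≠ 0) (S : Finset A) (r : ℝ) (hr : 0 < r) :
    ∃ v : A →ₐ[ℂ] ℂ, (∀ a ∈ S, ‖v a - v₀ a‖ < r) ∧ v g ≠ 0 := by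
  obtain ⟨d, φ, hφ, hintg⟩ := exists_integral_inj_algHom_of_fg ℂ A
  letI : Algebra (MvPolynomial (Fin d) ℂ) A := φ.toRingHom.toAlgebra
  haveI : IsScalarTower ℂ (MvPolynomial (Fin d) ℂ) A :=
    IsScalarTower.of_algebraMap_eq fun c => (φ.commutes c).symm
  haveI : Algebra.IsIntegral (MvPolynomial (Fin d) ℂ) A := ⟨hintg⟩
  exact density_core (d := d) hφ v₀ g hg S r hr

end Part6

section Part7

section Tame
variable {n : ℕ}

theorem eMon_zero_mul {R : Type*} [CommRing R] (f : MvPolynomial (Fin n) R) (γ γ' : Expo n) :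
    eMon 0 f γ * eMon 0 f γ' = eMon 0 f (γ + γ') := by
  have h : ∀ γ : Expo n, eMon 0 f γ = aeval (fun i => pderiv i f) (monomial γ.1 (1 : R)) *
      monomial γ.2 1 := fun γ => by rw [eMon, rho_zero_eps]
  have h1 : (monomial (γ + γ').1 (1 : R) : MvPolynomial (Fin n) R) =
    monomial γ.1 1 * monomial γ'.1 1 := by rw [monomial_mul]; simp
  have h2 : (monomial (γ + γ').2 (1 : R) : MvPolynomial (Fin n) R) =
    monomial γ.2 1 * monomial γ'.2 1 := by rw [monomial_mul]; simp
  rw [h, h, h, h1, h2, map_mul]; ring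

theorem eSpan_zero_mul {R : Type*} [CommRing R] (f : MvPolynomial (Fin n) R) {j k : ℕ} {a b}
    (ha : a ∈ eSpan 0 f (FE n j)) (hb : b ∈ eSpan 0 f (FE n k)) :
    a * b ∈ eSpan 0 f (FE n (j + k)) := by
  have : eSpan 0 f (FE n j) * eSpan 0 f (FE n k) ≤ eSpan 0 f (FE n (j + k)) := by
    unfold eSpan
    rw [Submodule.span_mul_span, Submodule.span_le]
    rintro _ ⟨_, ⟨γ, hγ, rfl⟩, _, ⟨γ', hγ', rfl⟩, rfl⟩
    simp only [eMon_zero_mul]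
    refine eMon_mem _ _ ?_
    simp only [FE, Set.mem_ofPred_eq, Prod.snd_add, map_add] at *
    omega
  exact this (Submodule.mul_mem_mul ha hb)

variable (f : MvPolynomial (Fin n) ℂ) (i : Fin n)

abbrev FracX (n : ℕ) := FractionRing (MvPolynomial (Fin n) ℂ)

/-- embedding -/
def emK {n : ℕ} : MvPolynomial (Fin n) ℂ →ₐ[ℂ] FracX n := Algebra.algHom ℂ _ _

theorem emK_inj : Function.Injective (emK (n := n)) := IsFractionRing.injective _ _

def gens : Set (FracX n) := {(emK (X i))⁻¹} ∪ (Set.range (fun j => emK (X j) * (emK (X i))⁻¹) ∪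
  Set.range fun j => emK (pderiv j f))

theorem gens_bound (a : FracX n) (ha : a ∈ Algebra.adjoin ℂ (gens f i)) :
    ∃ N, ∃ b ∈ eSpan 0 f (FE n N), emK (X i) ^ N * a = emK b := by
  have hX : emK (X i : MvPolynomial (Fin n) ℂ) ≠ 0 := by
    intro h; exact X_ne_zero i (emK_inj (h.trans (map_zero _).symm))
  have hXm : ∀ j : Fin n, (X j : MvPolynomial (Fin n) ℂ) ∈ eSpan 0 f (FE n 1) := by
    intro j
    have := eMon_mem (A := FE n 1) 0 f (γ := (0, Finsupp.single j 1)) (by simp [FE])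
    rwa [eMon_zero_left] at this
  have h1m : ∀ N, (1 : MvPolynomial (Fin n) ℂ) ∈ eSpan 0 f (FE n N) := by
    intro N
    have := eMon_mem (A := FE n N) 0 f (γ := (0, 0)) (by simp [FE])
    rwa [eMon_zero_left] at this
  have hpow : ∀ (M N : ℕ) (b), b ∈ eSpan 0 f (FE n N) → X i ^ M * b ∈ eSpan 0 f (FE n (M + N)) := by
    intro M N b hb
    induction M with
    | zero => simpa using hb
    | succ M ih =>
      rw [pow_succ', mul_assoc, Nat.add_right_comm]
      exact X_mul_FE _ _ _ _ ih
  induction ha using Algebra.adjoin_induction with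
  | mem x hx =>
    rcases hx with hx | ⟨j, rfl⟩ | ⟨j, rfl⟩
    · rw [Set.mem_singleton_iff] at hx
      subst hx
      refine ⟨1, 1, h1m 1, by simp [hX]⟩
    · refine ⟨1, X j, hXm j, ?_⟩
      simp only []
      field_simp
    · refine ⟨0, pderiv j f, ?_, by simp⟩
      have := eMon_mem (A := FE n 0) 0 f (γ := (Finsupp.single j 1, 0)) (by simp [FE])
      rw [eMon_zero_eps] at this
      simpa using this
  | algebraMap c =>
    refine ⟨0, C c, ?_, ?_⟩
    · have := Submodule.smul_mem _ c (h1m 0)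
      rwa [smul_eq_C_mul, mul_one] at this
    · rw [pow_zero, one_mul]; exact (AlgHom.commutes emK c).symm
  | add x y _ _ hx hy =>
    obtain ⟨N, b, hb, hbx⟩ := hx
    obtain ⟨M, c, hc, hcy⟩ := hy
    refine ⟨M + N, X i ^ M * b + X i ^ N * c, ?_, ?_⟩
    · refine add_mem (hpow _ _ _ hb) ?_
      rw [add_comm]
      exact hpow _ _ _ hc
    · simp only [map_add, map_mul, map_pow, ← hbx, ← hcy]; ring
  | mul x y _ _ hx hy =>
    obtain ⟨N, b, hb, hbx⟩ := hx
    obtain ⟨M, c, hc, hcy⟩ := hy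
    refine ⟨N + M, b * c, eSpan_zero_mul f hb hc, ?_⟩
    rw [map_mul, ← hbx, ← hcy]; ring

theorem gens_bound' (a : FracX n) (ha : a ∈ Algebra.adjoin ℂ (gens f i)) :
    ∃ N₀, ∀ N ≥ N₀, ∃ b ∈ eSpan 0 f (FE n N), emK (X i) ^ N * a = emK b := by
  obtain ⟨N, b, hb, h⟩ := gens_bound f i a ha
  refine ⟨N, fun M hM => ?_⟩
  induction M, hM using Nat.le_induction with
  | base => exact ⟨b, hb, h⟩
  | succ M _ ih =>
    obtain ⟨c, hc, h⟩ := ih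
    refine ⟨X i * c, X_mul_FE _ _ _ _ hc, ?_⟩
    rw [map_mul, ← h]; ring

theorem tame_step
    (htame : ∃ C δ : ℝ, 0 < C ∧ 0 < δ ∧
      ∀ x : Fin n → ℂ,
        C ≤ Real.sqrt (∑ i, ‖x i‖ ^ 2) →
        δ ≤ Real.sqrt (∑ i, ‖eval x (pderiv i f)‖ ^ 2)) :
    ∃ a, X i ^ a ∈ eSpan 0 f (EE n a) := by
  classical
  have hX : emK (X i : MvPolynomial (Fin n) ℂ) ≠ 0 := by
    intro h; exact X_ne_zero i (emK_inj (h.trans (map_zero _).symm))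
  let A := Algebra.adjoin ℂ (gens f i)
  have hGfin : (gens f i).Finite := by
    unfold gens
    exact (Set.finite_singleton _).union ((Set.finite_range _).union (Set.finite_range _))
  haveI : Algebra.FiniteType ℂ A := by
    have : A.FG := Subalgebra.fg_def.2 ⟨_, hGfin, rfl⟩
    exact A.fg_iff_finiteType.1 this
  let z : A := ⟨(emK (X i))⁻¹, Algebra.subset_adjoin (Or.inl rfl)⟩
  let u : Fin n → A := fun j => ⟨emK (X j) * (emK (X i))⁻¹, Algebra.subset_adjoin (Or.inr (Or.inl ⟨j, rfl⟩))⟩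
  let y : Fin n → A := fun j => ⟨emK (pderiv j f), Algebra.subset_adjoin (Or.inr (Or.inr ⟨j, rfl⟩))⟩
  by_cases hI : Ideal.span ({z} ∪ Set.range y) = ⊤
  · have h1 : (1 : A) ∈ Ideal.span {z} ⊔ Ideal.span (Set.range y) := by
      rw [← Ideal.span_union, hI]; trivial
    obtain ⟨p, hp, q, hq, hpq⟩ := Submodule.mem_sup.1 h1
    obtain ⟨a, rfl⟩ := Ideal.mem_span_singleton'.1 hp
    obtain ⟨c, rfl⟩ := Ideal.mem_span_range_iff_exists_fun.1 hq
    obtain ⟨N0, hN0⟩ := gens_bound' f i a a.2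
    choose Nj hNj using fun j => gens_bound' f i (c j) (c j).2
    let M := N0 + ∑ j, Nj j
    obtain ⟨b0, hb0, e0⟩ := hN0 M (Nat.le_add_right _ _)
    have hM : ∀ j, Nj j ≤ M + 1 := fun j =>
      (Finset.single_le_sum (f := Nj) (fun _ _ => Nat.zero_le _) (Finset.mem_univ j)).trans (by omega)
    choose b hb e using fun j => hNj j (M + 1) (hM j)
    refine ⟨M + 1, ?_⟩
    have key : (X i : MvPolynomial (Fin n) ℂ) ^ (M + 1) = b0 + ∑ j, xiOp 0 f j (b j) := by
      apply emK_inj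
      have h2 : (1 : FracX n) = (a : FracX n) * (emK (X i))⁻¹ + ∑ j, (c j : FracX n) * emK (pderiv j f) := by
        have := congrArg (fun t : A => (t : FracX n)) hpq
        simp only [AddMemClass.coe_add, MulMemClass.coe_mul, AddSubmonoidClass.coe_finset_sum,
          OneMemClass.coe_one] at this
        exact this.symm
      have h3 : emK (X i : MvPolynomial (Fin n) ℂ) ^ (M + 1) =
          emK (X i) ^ M * (a : FracX n) + ∑ j, emK (pderiv j f) * (emK (X i) ^ (M + 1) * (c j : FracX n)) := by
        calc emK (X i : MvPolynomial (Fin n) ℂ) ^ (M + 1) = emK (X i) ^ (M + 1) * 1 := by ring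
          _ = _ := by
            rw [h2, mul_add, Finset.mul_sum]
            congr 1
            · field_simp
              ring
            · exact Finset.sum_congr rfl fun j _ => by ring
      rw [map_pow, h3, e0, map_add, map_sum]
      congr 1
      refine Finset.sum_congr rfl fun j _ => ?_
      rw [e j, xiOp_apply, zero_smul, zero_add, map_mul]
    rw [key]
    refine add_mem (eSpan_mono _ _ ?_ hb0) (sum_mem fun j _ => xiOp_eSpan 0 f j ?_ (hb j))
    · intro γ hγ
      left
      simp only [FE, Set.mem_ofPred_eq] at hγ
      omega
    · intro γ hγ
      right
      refine ⟨?_, hγ⟩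
      intro h
      have := DFunLike.congr_fun h j
      simp at this
  · exfalso
    obtain ⟨Q, hQ, hIQ⟩ := Ideal.exists_le_maximal _ hI
    obtain ⟨v₀, hv₀⟩ := exists_point Q hQ
    have hz0 : v₀ z = 0 := (hv₀ _).2 (hIQ (Ideal.subset_span (Or.inl rfl)))
    have hy0 : ∀ j, v₀ (y j) = 0 := fun j => (hv₀ _).2 (hIQ (Ideal.subset_span (Or.inr ⟨j, rfl⟩)))
    obtain ⟨C, δ, hC, hδ, ht⟩ := htame
    let r := min (1 / C) (δ / (n + 1))
    have hr : 0 < r := lt_min (by positivity) (by positivity)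
    have hzne : z ≠ 0 := by
      intro h
      have := congrArg (fun t : A => (t : FracX n)) h
      exact inv_ne_zero hX this
    obtain ⟨v, hv, hvz⟩ := density v₀ z hzne ({z} ∪ Finset.univ.image y) r hr
    have hvz' : ‖v z‖ < r := by
      have := hv z (by simp)
      rwa [hz0, sub_zero] at this
    have hvy : ∀ j, ‖v (y j)‖ < r := by
      intro j
      have := hv (y j) (by simp)
      rwa [hy0, sub_zero] at this
    let x : Fin n → ℂ := fun j => v (u j) / v z
    have hpol : ∀ p : MvPolynomial (Fin n) ℂ, ∃ M, ∃ a : A, (a : FracX n) = (z : FracX n) ^ M * emK p ∧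
        v a = v z ^ M * eval x p := by
      intro p
      induction p using MvPolynomial.induction_on with
      | C c =>
        refine ⟨0, algebraMap ℂ A c, ?_, by simp⟩
        rw [pow_zero, one_mul]; exact (AlgHom.commutes emK c).symm
      | add p q hp hq =>
        obtain ⟨M, a, ha, hva⟩ := hp
        obtain ⟨M', a', ha', hva'⟩ := hq
        refine ⟨M + M', z ^ M' * a + z ^ M * a', ?_, ?_⟩
        · push_cast
          rw [ha, ha', map_add]; ring
        · rw [map_add, map_mul, map_mul, map_pow, map_pow, hva, hva', map_add]; ring
      | mul_X p j hp =>
        obtain ⟨M, a, ha, hva⟩ := hp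
        refine ⟨M + 1, a * u j, ?_, ?_⟩
        · push_cast
          rw [ha, map_mul]
          change _ * (emK (X j) * (emK (X i))⁻¹) = (emK (X i))⁻¹ ^ (M + 1) * _
          change (emK (X i))⁻¹ ^ M * _ * (emK (X j) * (emK (X i))⁻¹) = _
          ring
        · rw [map_mul, hva, map_mul, eval_X]
          simp only [x]
          field_simp
          ring
    have hgrad : ∀ j, eval x (pderiv j f) = v (y j) := by
      intro j
      obtain ⟨M, a, ha, hva⟩ := hpol (pderiv j f)
      have : a = z ^ M * y j := by
        apply Subtype.ext
        rw [ha]; push_cast; rfl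
      rw [this, map_mul, map_pow] at hva
      exact (mul_left_cancel₀ (pow_ne_zero M hvz) hva).symm
    have hui : u i = 1 := by
      apply Subtype.ext
      change emK (X i) * (emK (X i))⁻¹ = 1
      exact mul_inv_cancel₀ hX
    have hxi : C ≤ ‖x i‖ := by
      simp only [x, hui, map_one, norm_div, norm_one]
      have h1 : ‖v z‖ ≤ 1 / C := hvz'.le.trans (min_le_left _ _)
      have h2 : 0 < ‖v z‖ := norm_pos_iff.2 hvz
      rw [le_div_iff₀ h2]
      rw [le_div_iff₀ hC] at h1
      linarith
    have h3 := ht x (hxi.trans (by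
      apply Real.le_sqrt_of_sq_le
      exact Finset.single_le_sum (f := fun j => ‖x j‖ ^ 2) (fun _ _ => sq_nonneg _) (Finset.mem_univ i)))
    have h4 : ∑ j, ‖eval x (pderiv j f)‖ ^ 2 ≤ ∑ j : Fin n, (δ / (n + 1)) ^ 2 := by
      refine Finset.sum_le_sum fun j _ => ?_
      rw [hgrad]
      exact pow_le_pow_left₀ (norm_nonneg _) ((hvy j).le.trans (min_le_right _ _)) 2
    have h5 := h3.trans (Real.sqrt_le_sqrt h4)
    rw [Real.le_sqrt hδ.le (by positivity)] at h5
    simp only [Finset.sum_const, Finset.card_univ, Fintype.card_fin, nsmul_eq_mul] at h5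
    have hn1 : (0 : ℝ) < n + 1 := by positivity
    have h6 : (n : ℝ) * (δ / (n + 1)) ^ 2 < δ ^ 2 := by
      rw [div_pow, mul_div_assoc', div_lt_iff₀ (by positivity)]
      have : (0 : ℝ) ≤ n := Nat.cast_nonneg n
      nlinarith [sq_nonneg (δ : ℝ), mul_pos hδ hδ, mul_nonneg this (sq_nonneg δ), mul_nonneg (mul_nonneg this this) (sq_nonneg δ)]
    linarith

end Tame

end Part7

section Part8

section LemK
variable {κ : Type*} [Field κ]

theorem weyl_pow_comm {Q : Type*} [AddCommGroup Q] [Module κ Q] (ξ x : Module.End κ Q)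
    (h : ξ * x - x * ξ = 1) (m : ℕ) : x ^ (m + 1) * ξ = ξ * x ^ (m + 1) - (m + 1 : ℕ) • x ^ m := by
  have hx : x * ξ = ξ * x - 1 := by rw [← h]; abel
  induction m with
  | zero => simp [hx]
  | succ m ih =>
    rw [pow_succ', mul_assoc, ih, mul_sub, ← mul_assoc, hx, sub_mul, one_mul, mul_assoc,
      ← pow_succ', mul_smul_comm, ← pow_succ', succ_nsmul _ (m + 1)]
    abel

/-- `ker ξ^j ⊆ im ξ` for `j!` invertible -/
theorem weyl_ker {Q : Type*} [AddCommGroup Q] [Module κ Q] (ξ x : Module.End κ Q)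
    (h : ξ * x - x * ξ = 1) (j : ℕ) (hj : (j.factorial : κ) ≠ 0) (u : Q) (hu : (ξ ^ j) u = 0) :
    u ∈ LinearMap.range ξ := by
  have key : ∀ j : ℕ, ∃ y : Q, (x ^ j) ((ξ ^ j) u) = ξ y + ((-1) ^ j * (j.factorial : κ)) • u := by
    intro j
    induction j with
    | zero => exact ⟨0, by simp⟩
    | succ j ih =>
      obtain ⟨y, hy⟩ := ih
      have e : (x ^ (j + 1)) ((ξ ^ (j + 1)) u) = (x ^ (j + 1) * ξ) ((ξ ^ j) u) := by
        rw [pow_succ' ξ]; rfl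
      rw [e, weyl_pow_comm ξ x h]
      refine ⟨(x ^ (j + 1)) ((ξ ^ j) u) - (j + 1 : ℕ) • y, ?_⟩
      simp only [LinearMap.sub_apply, Module.End.mul_apply, LinearMap.smul_apply, hy]
      rw [map_sub, map_nsmul, smul_add, Nat.factorial_succ, ← Nat.cast_smul_eq_nsmul κ (j + 1) (_ • u), smul_smul]
      push_cast
      have : (-1 : κ) ^ (j + 1) * (((j : κ) + 1) * (j.factorial : κ)) =
        - (((j : κ) + 1) * ((-1) ^ j * (j.factorial : κ))) := by ring
      rw [this, neg_smul]; abel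
  obtain ⟨y, hy⟩ := key j
  rw [hu, map_zero] at hy
  have hne : ((-1 : κ) ^ j * (j.factorial : κ)) ≠ 0 := mul_ne_zero (pow_ne_zero _ (by simp)) hj
  refine ⟨(((-1 : κ) ^ j * (j.factorial : κ))⁻¹) • (-y), ?_⟩
  rw [map_smul, map_neg, eq_neg_of_add_eq_zero_left hy.symm, neg_neg, smul_smul, inv_mul_cancel₀ hne, one_smul]


theorem lemK (p : ℕ) [Fact p.Prime] [CharP κ p] {Q : Type*} [AddCommGroup Q] [Module κ Q] (ξ x : Module.End κ Q)
    (h : ξ * x - x * ξ = 1) :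
    (LinearMap.range (ξ ^ p)).toAddSubgroup.index = (LinearMap.range ξ).toAddSubgroup.index ^ p := by
  have key : ∀ j ≤ p, (LinearMap.range (ξ ^ j)).toAddSubgroup.index =
      (LinearMap.range ξ).toAddSubgroup.index ^ j := by
    intro j
    induction j with
    | zero =>
      intro _
      have : LinearMap.range (1 : Module.End κ Q) = ⊤ := LinearMap.range_id
      simp [this]
    | succ j ih =>
      intro hj
      have h1 := AddSubgroup.index_map (LinearMap.range ξ).toAddSubgroup (ξ ^ j).toAddMonoidHom
      have h2 : (LinearMap.range ξ).toAddSubgroup ⊔ (ξ ^ j).toAddMonoidHom.ker =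
          (LinearMap.range ξ).toAddSubgroup := by
        rw [sup_eq_left]
        intro u hu
        refine weyl_ker ξ x h j ?_ u hu
        rw [Ne, CharP.cast_eq_zero_iff κ p, (Fact.out : p.Prime).dvd_factorial]
        omega
      have h3 : AddSubgroup.map (ξ ^ j).toAddMonoidHom (LinearMap.range ξ).toAddSubgroup =
          (LinearMap.range (ξ ^ (j + 1))).toAddSubgroup := by
        ext u
        constructor
        · rintro ⟨_, ⟨w, rfl⟩, rfl⟩
          exact ⟨w, by rw [pow_succ]; rfl⟩
        · rintro ⟨w, rfl⟩
          exact ⟨ξ w, ⟨w, rfl⟩, by rw [pow_succ]; rfl⟩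
      have h4 : (ξ ^ j).toAddMonoidHom.range = (LinearMap.range (ξ ^ j)).toAddSubgroup := rfl
      rw [h2, h3, h4, ih (by omega)] at h1
      rw [h1, pow_succ, mul_comm]
  exact key p le_rfl

theorem lemK2 (p : ℕ) [Fact p.Prime] [CharP κ p] {M : Type*} [AddCommGroup M] [Module κ M] (ξ x : Module.End κ M)
    (h : ξ * x - x * ξ = 1) (N₀ : Submodule κ M) (h1 : N₀ ≤ N₀.comap ξ) (h2 : N₀ ≤ N₀.comap x) :
    (LinearMap.range (ξ ^ p) ⊔ N₀).toAddSubgroup.index =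
      (LinearMap.range ξ ⊔ N₀).toAddSubgroup.index ^ p := by
  let Ξ : Module.End κ (M ⧸ N₀) := N₀.mapQ N₀ ξ h1
  let Y : Module.End κ (M ⧸ N₀) := N₀.mapQ N₀ x h2
  have hΞ : ∀ m v, (Ξ ^ m) (N₀.mkQ v) = N₀.mkQ ((ξ ^ m) v) := by
    intro m
    induction m with
    | zero => intro v; rfl
    | succ m ih =>
      intro v
      rw [pow_succ', pow_succ', Module.End.mul_apply, ih]; rfl
  have hrel : Ξ * Y - Y * Ξ = 1 := by
    apply LinearMap.ext
    intro v
    obtain ⟨v, rfl⟩ := N₀.mkQ_surjective v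
    change N₀.mkQ (ξ (x v)) - N₀.mkQ (x (ξ v)) = N₀.mkQ v
    rw [← map_sub]
    exact congrArg _ (DFunLike.congr_fun h v)
  have hc : ∀ m, (LinearMap.range (Ξ ^ m)).comap N₀.mkQ = LinearMap.range (ξ ^ m) ⊔ N₀ := by
    intro m
    have : LinearMap.range (Ξ ^ m) = (LinearMap.range (ξ ^ m)).map N₀.mkQ := by
      ext u
      constructor
      · rintro ⟨w, rfl⟩
        obtain ⟨w, rfl⟩ := N₀.mkQ_surjective w
        exact ⟨_, ⟨w, rfl⟩, (hΞ m w).symm⟩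
      · rintro ⟨_, ⟨w, rfl⟩, rfl⟩
        exact ⟨N₀.mkQ w, hΞ m w⟩
    rw [this, Submodule.comap_map_mkQ, sup_comm]
  have hi : ∀ m, (LinearMap.range (ξ ^ m) ⊔ N₀).toAddSubgroup.index =
      (LinearMap.range (Ξ ^ m)).toAddSubgroup.index := by
    intro m
    rw [← hc m]
    have h := AddSubgroup.index_comap_of_surjective (LinearMap.range (Ξ ^ m)).toAddSubgroup
      (f := (N₀.mkQ.toAddMonoidHom)) N₀.mkQ_surjective
    rw [← h]
    congr 1
  have e1 := hi 1
  rw [pow_one, pow_one] at e1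
  rw [hi p, e1]
  exact lemK p Ξ Y hrel

end LemK

section Count
variable {n : ℕ} {κ : Type*} [Field κ] (p : ℕ) [Fact p.Prime] [CharP κ p]

/-- `Σ_i ξ_i M` -/
def WW {R : Type*} [CommRing R] (ε : R) (f : MvPolynomial (Fin n) R) :
    Submodule R (MvPolynomial (Fin n) R) := ⨆ i, LinearMap.range (xiOp ε f i)

theorem mem_WW {R : Type*} [CommRing R] {ε : R} {f : MvPolynomial (Fin n) R} {v} :
    v ∈ WW ε f ↔ ∃ q : Fin n → MvPolynomial (Fin n) R, v = ∑ i, xiOp ε f i (q i) := by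
  unfold WW
  constructor
  · intro h
    rw [Submodule.mem_iSup_iff_exists_finsupp] at h
    obtain ⟨g, hg, rfl⟩ := h
    choose q hq using hg
    refine ⟨q, ?_⟩
    rw [Finsupp.sum_fintype _ _ (fun _ => rfl)]
    exact Finset.sum_congr rfl fun i _ => (hq i).symm
  · rintro ⟨q, rfl⟩
    exact sum_mem fun i _ => Submodule.mem_iSup_of_mem i ⟨q i, rfl⟩

def TT (f : MvPolynomial (Fin n) κ) (e : Fin n → ℕ) : Submodule κ (MvPolynomial (Fin n) κ) :=
  ⨆ i, LinearMap.range (xiOp 1 f i ^ e i)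

theorem TT_step (f : MvPolynomial (Fin n) κ) (e : Fin n → ℕ) (a : Fin n) (ha : e a = 1) :
    (TT f (Function.update e a p)).toAddSubgroup.index = (TT f e).toAddSubgroup.index ^ p := by
  let N₀ : Submodule κ (MvPolynomial (Fin n) κ) :=
    ⨆ i : {i // i ≠ a}, LinearMap.range (xiOp 1 f i ^ e i)
  have hsplit : ∀ e' : Fin n → ℕ, (∀ i, i ≠ a → e' i = e i) →
      TT f e' = LinearMap.range (xiOp 1 f a ^ e' a) ⊔ N₀ := by
    intro e' he
    apply le_antisymm
    · refine iSup_le fun i => ?_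
      by_cases h : i = a
      · subst h; exact le_sup_left
      · refine le_trans ?_ le_sup_right
        rw [he i h]
        exact le_iSup (fun i : {i // i ≠ a} => LinearMap.range (xiOp 1 f i ^ e i)) ⟨i, h⟩
    · refine sup_le (le_iSup (fun i => LinearMap.range (xiOp 1 f i ^ e' i)) a) (iSup_le ?_)
      rintro ⟨i, h⟩
      have := le_iSup (fun i => LinearMap.range (xiOp 1 f i ^ e' i)) i
      simp only [he i h] at this
      exact this
  have hcomm : ∀ (g : Module.End κ (MvPolynomial (Fin n) κ)),
      (∀ i, i ≠ a → Commute g (xiOp 1 f i)) → N₀ ≤ N₀.comap g := by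
    intro g hg
    refine iSup_le ?_
    rintro ⟨i, h⟩ _ ⟨w, rfl⟩
    rw [Submodule.mem_comap]
    refine Submodule.mem_iSup_of_mem ⟨i, h⟩ ⟨g w, ?_⟩
    exact (DFunLike.congr_fun ((hg i h).pow_right (e i)).eq w).symm
  rw [hsplit e (fun _ _ => rfl), hsplit (Function.update e a p) (fun i h => Function.update_of_ne h _ _),
    Function.update_self, ha, pow_one]
  refine lemK2 p (xiOp 1 f a) (LinearMap.mulLeft κ (X a)) ?_ N₀ ?_ ?_
  · apply LinearMap.ext
    intro v
    have := X_mul_xiOp 1 f a a v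
    simp only [LinearMap.sub_apply, Module.End.mul_apply, LinearMap.mulLeft_apply, this]
    simp
  · exact hcomm _ fun i _ => xiOp_comm 1 f a i
  · refine hcomm _ fun i h => ?_
    apply LinearMap.ext
    intro v
    have := X_mul_xiOp 1 f a i v
    simp only [Module.End.mul_apply, LinearMap.mulLeft_apply, this, if_neg (Ne.symm h), sub_zero]

theorem TT_all (f : MvPolynomial (Fin n) κ) :
    (TT f (fun _ => p)).toAddSubgroup.index = (WW 1 f).toAddSubgroup.index ^ (p ^ n) := by
  classical
  have key : ∀ s : Finset (Fin n), (TT f (fun i => if i ∈ s then p else 1)).toAddSubgroup.index =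
      (WW 1 f).toAddSubgroup.index ^ (p ^ s.card) := by
    intro s
    induction s using Finset.induction_on with
    | empty => simp [TT, WW]
    | insert a s ha ih =>
      have := TT_step p f (fun i => if i ∈ s then p else 1) a (by simp [ha])
      rw [ih, ← pow_mul, ← pow_succ] at this
      rw [Finset.card_insert_of_notMem ha, ← this]
      congr 3
      funext i
      by_cases h : i = a
      · subst h; simp
      · simp [h]
  have := key Finset.univ
  simpa using this

end Count

end Part8

section Part9

section Frob
variable {n : ℕ} {κ : Type*} [Field κ] (p : ℕ) [Fact p.Prime] [CharP κ p] 

/-- exponent in the box -/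
def bx (β : Fin n → Fin p) : Fin n →₀ ℕ := Finsupp.equivFunOnFinite.symm fun i => (β i : ℕ)

def bxMod (γ : Fin n →₀ ℕ) : Fin n → Fin p :=
  fun i => ⟨γ i % p, Nat.mod_lt _ (Fact.out : p.Prime).pos⟩

def bxDiv (γ : Fin n →₀ ℕ) : Fin n →₀ ℕ := Finsupp.equivFunOnFinite.symm fun i => γ i / p

/-- `g ↦ Σ x^β g_β^p` -/
def PhiF (n : ℕ) (κ : Type*) [Field κ] [CharP κ p] :
    ((Fin n → Fin p) → MvPolynomial (Fin n) κ) →+ MvPolynomial (Fin n) κ where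
  toFun g := ∑ β, monomial (bx p β) 1 * g β ^ p
  map_zero' := by simp [zero_pow (Fact.out : p.Prime).ne_zero]
  map_add' g h := by simp [add_pow_char, mul_add, Finset.sum_add_distrib]

theorem PhiF_single (β : Fin n → Fin p) (α : Fin n →₀ ℕ) (c : κ) :
    PhiF p n κ (Pi.single β (monomial α c)) = monomial (bx p β + p • α) (c ^ p) := by
  classical
  change ∑ β', _ = _
  rw [Finset.sum_eq_single β]
  · simp [monomial_pow, monomial_mul]
  · intro b _ hb
    simp [Pi.single_eq_of_ne hb, zero_pow (Fact.out : p.Prime).ne_zero]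
  · simp

def PsiF (n : ℕ) (κ : Type*) [Field κ] [CharP κ p] [PerfectRing κ p] :
    MvPolynomial (Fin n) κ →+ ((Fin n → Fin p) → MvPolynomial (Fin n) κ) :=
  (Finsupp.liftAddHom fun γ : Fin n →₀ ℕ =>
    (AddMonoidHom.single (fun _ : Fin n → Fin p => MvPolynomial (Fin n) κ) (bxMod p γ)).comp
      ((monomial (bxDiv p γ) : κ →ₗ[κ] _).toAddMonoidHom.comp
        ((frobeniusEquiv κ p).symm : κ →+* κ).toAddMonoidHom)).comp
          (AddMonoidAlgebra.coeffAddEquiv (R := κ) (M := Fin n →₀ ℕ)).toAddMonoidHom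

theorem PsiF_monomial [PerfectRing κ p] (γ : Fin n →₀ ℕ) (c : κ) :
    PsiF p n κ (monomial γ c) =
      Pi.single (bxMod p γ) (monomial (bxDiv p γ) ((frobeniusEquiv κ p).symm c)) := by
  have h : AddMonoidAlgebra.coeffAddEquiv (monomial γ c : MvPolynomial (Fin n) κ) =
    Finsupp.single γ c := rfl
  unfold PsiF
  simp only [AddMonoidHom.comp_apply]
  change Finsupp.liftAddHom _ (AddMonoidAlgebra.coeffAddEquiv (monomial γ c : MvPolynomial (Fin n) κ)) = _
  rw [h, Finsupp.liftAddHom_apply_single]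
  rfl

theorem bx_div_mod (γ : Fin n →₀ ℕ) : bx p (bxMod p γ) + p • bxDiv p γ = γ := by
  ext i
  simp [bx, bxMod, bxDiv, Nat.mod_add_div]

theorem bxMod_add (β : Fin n → Fin p) (α : Fin n →₀ ℕ) : bxMod p (bx p β + p • α) = β := by
  funext i
  apply Fin.ext
  simp [bx, bxMod, Nat.mod_eq_of_lt (β i).2]

theorem bxDiv_add (β : Fin n → Fin p) (α : Fin n →₀ ℕ) : bxDiv p (bx p β + p • α) = α := by
  ext i
  simp [bx, bxDiv, Nat.add_mul_div_left _ _ (Fact.out : p.Prime).pos, Nat.div_eq_of_lt (β i).2]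

theorem PhiF_bij [PerfectRing κ p] : Function.Bijective (PhiF p n κ) := by
  classical
  rw [Function.bijective_iff_has_inverse]
  refine ⟨PsiF p n κ, fun g => ?_, fun v => ?_⟩
  · have h : (PsiF p n κ).comp (PhiF p n κ) = AddMonoidHom.id _ := by
      apply AddMonoidHom.functions_ext
      intro β v
      induction v using MvPolynomial.induction_on' with
      | monomial α c =>
        rw [AddMonoidHom.comp_apply, PhiF_single, PsiF_monomial, bxMod_add, bxDiv_add]
        simp
      | add v w hv hw => rw [Pi.single_add, map_add, map_add, hv, hw]
    exact DFunLike.congr_fun h g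
  · induction v using MvPolynomial.induction_on' with
    | monomial γ c =>
      rw [PsiF_monomial, PhiF_single, bx_div_mod]
      congr 1
      exact frobeniusEquiv_symm_pow_p κ p c
    | add v w hv hw => rw [map_add, map_add, hv, hw]

theorem xiOp_pow_p_apply (f : MvPolynomial (Fin n) κ) (i : Fin n) (v) :
    (xiOp 1 f i ^ p) v = pderiv i f ^ p * v := by
  rw [← rho_X_pow_p, ← rho_X, ← map_pow]

theorem frob_index [PerfectRing κ p] (f : MvPolynomial (Fin n) κ) :
    (TT f (fun _ => p)).toAddSubgroup.index = (WW 0 f).toAddSubgroup.index ^ (p ^ n) := by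
  have h1 := AddSubgroup.index_map_of_bijective (f := PhiF p n κ) (PhiF_bij p)
    (AddSubgroup.pi Set.univ fun _ : Fin n → Fin p => (WW 0 f).toAddSubgroup)
  rw [AddSubgroup.index_pi, Finset.prod_const, Finset.card_univ, Fintype.card_fun,
    Fintype.card_fin, Fintype.card_fin] at h1
  rw [← h1]
  congr 1
  have hk : ∀ q : Fin n → (Fin n → Fin p) → MvPolynomial (Fin n) κ,
      PhiF p n κ (fun β => ∑ i, xiOp 0 f i (q i β)) = ∑ i, pderiv i f ^ p * PhiF p n κ (q i) := by
    intro q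
    change ∑ β, _ = _
    simp only [xiOp_apply, zero_smul, zero_add]
    have : ∀ i, PhiF p n κ (q i) = ∑ β, monomial (bx p β) 1 * q i β ^ p := fun i => rfl
    simp only [this, Finset.mul_sum, sum_pow_char]
    rw [Finset.sum_comm]
    refine Finset.sum_congr rfl fun i _ => Finset.sum_congr rfl fun β _ => ?_
    rw [mul_pow]; ring
  ext v
  rw [Submodule.mem_toAddSubgroup, AddSubgroup.mem_map]
  constructor
  · intro hv
    rw [TT, Submodule.mem_iSup_iff_exists_finsupp] at hv
    obtain ⟨g, hg, rfl⟩ := hv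
    choose q hq using hg
    choose q' hq' using fun i => (PhiF_bij (n := n) (κ := κ) p).2 (q i)
    refine ⟨fun β => ∑ i, xiOp 0 f i (q' i β), ?_, ?_⟩
    · intro β _
      exact mem_WW.2 ⟨fun i => q' i β, rfl⟩
    · rw [hk, Finsupp.sum_fintype _ _ (fun _ => rfl)]
      refine Finset.sum_congr rfl fun i _ => ?_
      rw [hq', ← hq, xiOp_pow_p_apply]
  · rintro ⟨g, hg, rfl⟩
    have hg' : ∀ β, g β ∈ WW 0 f := fun β => hg β trivial
    choose q hq using fun β => mem_WW.1 (hg' β)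
    have : g = fun β => ∑ i, xiOp 0 f i (q β i) := funext hq
    rw [this, hk fun i β => q β i]
    refine sum_mem fun i _ => Submodule.mem_iSup_of_mem i ⟨_, xiOp_pow_p_apply p f i _⟩

/-- the counting identity in characteristic `p` -/
theorem count_eq [PerfectRing κ p] (f : MvPolynomial (Fin n) κ) :
    (WW 1 f).toAddSubgroup.index = (WW 0 f).toAddSubgroup.index := by
  have h := (TT_all p f).symm.trans (frob_index p f)
  exact Nat.pow_left_injective (pow_ne_zero n (Fact.out : p.Prime).ne_zero) h

end Frob

end Part9

section Part10
section Spec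
variable {n : ℕ} {R : Type*} [CommRing R]

theorem eMon_mem_WW (ε : R) (f : MvPolynomial (Fin n) R) (γ : Expo n) (h : γ.1 ≠ 0) :
    eMon ε f γ ∈ WW ε f := by
  obtain ⟨i, hi⟩ := Finsupp.ne_iff.1 h
  have h1 : γ = ((γ.1 - Finsupp.single i 1) + Finsupp.single i 1, γ.2) := by
    refine Prod.ext ?_ rfl
    refine (tsub_add_cancel_of_le ?_).symm
    rw [Finsupp.single_le_iff]
    simp at hi; omega
  rw [h1, ← xiOp_eMon ε f i (γ.1 - Finsupp.single i 1, γ.2)]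
  unfold WW
  exact Submodule.mem_iSup_of_mem i ⟨_, rfl⟩

theorem monomial_mul_EE (ε : R) (f : MvPolynomial (Fin n) R) (β : Fin n →₀ ℕ) : ∀ (j : ℕ) {v}
    (_ : v ∈ eSpan ε f (EE n j)), monomial β 1 * v ∈ eSpan ε f (EE n (j + β.degree)) := by
  induction β using Finsupp.induction_linear with
  | zero => intro j v hv; simpa using hv
  | add g h ihg ihh =>
    intro j v hv
    have := ihg _ (ihh _ hv)
    rw [← mul_assoc, monomial_mul, one_mul] at this
    rwa [map_add, add_comm g.degree, ← add_assoc]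
  | single i k =>
    rw [Finsupp.degree_single, ← X_pow_eq_monomial]
    induction k with
    | zero => intro j v hv; simpa using hv
    | succ k ih =>
      intro j v hv
      have := X_mul_EE ε f i _ (ih _ hv)
      rw [pow_succ', mul_assoc]
      exact this

theorem pigeon (ε : R) (f : MvPolynomial (Fin n) R) (a : Fin n → ℕ)
    (hE : ∀ i, X i ^ a i ∈ eSpan ε f (EE n (a i))) (β : Fin n →₀ ℕ) (hβ : ∑ i, a i < β.degree) :
    monomial β 1 ∈ eSpan ε f (EE n β.degree) := by
  have : ∃ i, a i ≤ β i := by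
    by_contra! h
    have : β.degree ≤ ∑ i, a i := by
      rw [Finsupp.degree_eq_sum]
      exact Finset.sum_le_sum fun i _ => (h i).le
    omega
  obtain ⟨i, hi⟩ := this
  have h1 : β = (β - Finsupp.single i (a i)) + Finsupp.single i (a i) :=
    (tsub_add_cancel_of_le (Finsupp.single_le_iff.2 hi)).symm
  have h2 := monomial_mul_EE ε f (β - Finsupp.single i (a i)) _ (hE i)
  rw [X_pow_eq_monomial, monomial_mul, ← h1, mul_one] at h2
  convert h2 using 3
  conv_lhs => rw [h1]
  rw [map_add, Finsupp.degree_single, add_comm]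

theorem reduce (ε : R) (f : MvPolynomial (Fin n) R) (a : Fin n → ℕ)
    (hE : ∀ i, X i ^ a i ∈ eSpan ε f (EE n (a i))) (S : Submodule R (MvPolynomial (Fin n) R))
    (hS : WW ε f ≤ S) (hm : ∀ β : Fin n →₀ ℕ, β.degree ≤ ∑ i, a i → monomial β 1 ∈ S) : S = ⊤ := by
  have key : ∀ d, ∀ β : Fin n →₀ ℕ, β.degree = d → monomial β 1 ∈ S := by
    intro d
    induction d using Nat.strong_induction_on with
    | _ d ih =>
    intro β hβ
    by_cases h : β.degree ≤ ∑ i, a i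
    · exact hm β h
    have h1 := pigeon ε f a hE β (by omega)
    refine (Submodule.span_le.2 ?_ : eSpan ε f (EE n β.degree) ≤ S) h1
    rintro _ ⟨γ, hγ, rfl⟩
    by_cases h0 : γ.1 = 0
    · rcases hγ with h2 | h2
      · have : γ = (0, γ.2) := Prod.ext h0 rfl
        rw [this, eMon_zero_left]
        exact ih _ (by omega) _ rfl
      · exact absurd h0 h2.1
    · exact hS (eMon_mem_WW ε f γ h0)
  rw [eq_top_iff]
  intro v _
  rw [v.as_sum]
  refine sum_mem fun β _ => ?_
  have : monomial β (coeff β v) = coeff β v • monomial β (1:R) := by simp [smul_monomial]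
  rw [this]
  exact S.smul_mem _ (key _ β rfl)

theorem xiOp_map {R' : Type*} [CommRing R'] (φ : R →+* R') (ε : R) (f : MvPolynomial (Fin n) R)
    (i) (p) : map φ (xiOp ε f i p) = xiOp (φ ε) (map φ f) i (map φ p) := by
  rw [xiOp_apply, xiOp_apply, map_add, map_mul, pderiv_map, pderiv_map, smul_eq_C_mul, map_mul,
    map_C, smul_eq_C_mul]

theorem WW_map {R' : Type*} [CommRing R'] (φ : R →+* R') {ε : R} {f : MvPolynomial (Fin n) R}
    {v} (hv : v ∈ WW ε f) : map φ v ∈ WW (φ ε) (map φ f) := by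
  obtain ⟨q, rfl⟩ := mem_WW.1 hv
  refine mem_WW.2 ⟨fun i => map φ (q i), ?_⟩
  rw [map_sum]
  exact Finset.sum_congr rfl fun i _ => xiOp_map _ _ _ _ _

theorem smul_map' {R' : Type*} [CommRing R'] (φ : R →+* R') (c : R) (v : MvPolynomial (Fin n) R) :
    map φ (c • v) = φ c • map φ v := by
  rw [smul_eq_C_mul, map_mul, map_C, smul_eq_C_mul]

theorem specialize {K κ : Type*} [CommRing K] [Field κ] (φ : R →+* K)
    (hφ : Function.Injective φ) (q : R →+* κ) (hq : Function.Surjective q)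
    (ε : R) (f : MvPolynomial (Fin n) R) {r : ℕ} (b : Fin r → MvPolynomial (Fin n) R)
    (hind : ∀ c : Fin r → K, ∑ j, c j • map φ (b j) ∈ WW (φ ε) (map φ f) → c = 0)
    (hspan : ∀ v, ∃ c : Fin r → R, v - ∑ j, c j • b j ∈ WW ε f) :
    (WW (q ε) (map q f)).toAddSubgroup.index = Nat.card κ ^ r := by
  let g : (Fin r → κ) →ₗ[κ] (MvPolynomial (Fin n) κ ⧸ WW (q ε) (map q f)) :=
    (WW (q ε) (map q f)).mkQ ∘ₗ Fintype.linearCombination κ (fun j => map q (b j))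
  have hg : ∀ c, g c = (WW (q ε) (map q f)).mkQ (∑ j, c j • map q (b j)) := fun c => by
    simp [g, Fintype.linearCombination_apply]
  have hsurj : Function.Surjective g := by
    intro y
    obtain ⟨v, rfl⟩ := Submodule.mkQ_surjective _ y
    obtain ⟨v, rfl⟩ := map_surjective q hq v
    obtain ⟨c, hc⟩ := hspan v
    refine ⟨fun j => q (c j), ?_⟩
    rw [hg, ← sub_eq_zero, ← map_sub, ← neg_eq_zero, ← map_neg, neg_sub, Submodule.mkQ_apply,
      Submodule.Quotient.mk_eq_zero]
    have := WW_map q hc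
    rw [map_sub, map_sum] at this
    simpa only [smul_map'] using this
  have hinj : Function.Injective g := by
    rw [injective_iff_map_eq_zero]
    intro c hc
    rw [hg, Submodule.mkQ_apply, Submodule.Quotient.mk_eq_zero] at hc
    obtain ⟨p, hp⟩ := mem_WW.1 hc
    choose c' hc' using fun j => hq (c j)
    choose p' hp' using fun i => map_surjective q hq (p i)
    set v := ∑ j, c' j • b j - ∑ i, xiOp ε f i (p' i) with hv
    have hv0 : map q v = 0 := by
      rw [hv, map_sub, map_sum, map_sum, sub_eq_zero]
      simp only [smul_map', xiOp_map, hc', hp']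
      exact hp
    choose d hd using fun β : Fin n →₀ ℕ => hspan (monomial β 1)
    have hm : v - ∑ j, (∑ β ∈ v.support, coeff β v * d β j) • b j ∈ WW ε f := by
      have : v - ∑ j, (∑ β ∈ v.support, coeff β v * d β j) • b j =
          ∑ β ∈ v.support, coeff β v • (monomial β 1 - ∑ j, d β j • b j) := by
        simp only [smul_sub, Finset.sum_sub_distrib]
        congr 1
        · conv_lhs => rw [v.as_sum]
          refine Finset.sum_congr rfl fun β _ => ?_
          simp [smul_monomial]
        · simp only [Finset.smul_sum, Finset.sum_smul, mul_smul]
          exact Finset.sum_comm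
      rw [this]
      exact sum_mem fun β _ => Submodule.smul_mem _ _ (hd β)
    have hw : ∑ j, (c' j - ∑ β ∈ v.support, coeff β v * d β j) • b j ∈ WW ε f := by
      have h1 : ∑ i, xiOp ε f i (p' i) ∈ WW ε f := mem_WW.2 ⟨p', rfl⟩
      have := add_mem hm h1
      convert this using 1
      simp only [sub_smul, Finset.sum_sub_distrib, hv]
      abel
    have h2 := WW_map φ hw
    rw [map_sum] at h2
    simp only [smul_map'] at h2
    have h3 := hind _ h2
    funext j
    have h4 := congrFun h3 j
    have h5 : c' j = ∑ β ∈ v.support, coeff β v * d β j := by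
      apply hφ
      rw [← sub_eq_zero, ← map_sub]; exact h4
    rw [← hc', h5, map_sum]
    refine Finset.sum_eq_zero fun β _ => ?_
    rw [map_mul, ← coeff_map, hv0, coeff_zero, zero_mul]
  have hb := Nat.card_congr (Equiv.ofBijective g ⟨hinj, hsurj⟩)
  rw [Nat.card_fun, Nat.card_fin] at hb
  rw [hb]
  exact (Submodule.cardQuot_apply _)
end Spec

end Part10

section Part11
section ThmB
variable {n : ℕ}

theorem quot_finite {K : Type*} [Field K] (ε : K) (f : MvPolynomial (Fin n) K) (a : Fin n → ℕ)
    (hE : ∀ i, X i ^ a i ∈ eSpan ε f (EE n (a i))) :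
    Module.Finite K (MvPolynomial (Fin n) K ⧸ WW ε f) := by
  have hfin : {β : Fin n →₀ ℕ | β.degree ≤ ∑ i, a i}.Finite := by
    refine (Set.finite_Iic (Finsupp.equivFunOnFinite.symm fun _ => ∑ i, a i)).subset ?_
    intro β hβ i
    have : β.degree ≤ ∑ i, a i := hβ
    have h2 := Finsupp.le_degree i β
    simp; omega
  have htop := reduce ε f a hE (WW ε f ⊔ Submodule.span K
      ((fun β => monomial β 1) '' {β : Fin n →₀ ℕ | β.degree ≤ ∑ i, a i})) le_sup_left
      (fun β hβ => Submodule.mem_sup_right (Submodule.subset_span ⟨β, hβ, rfl⟩))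
  refine Module.Finite.of_surjective ((WW ε f).mkQ ∘ₗ (Submodule.span K
      ((fun β => monomial β 1) '' {β : Fin n →₀ ℕ | β.degree ≤ ∑ i, a i})).subtype)
      (hM := Module.Finite.span_of_finite K (hfin.image _)) ?_
  intro y
  obtain ⟨v, rfl⟩ := Submodule.mkQ_surjective _ y
  have hv : v ∈ (⊤ : Submodule K _) := trivial
  rw [← htop] at hv
  obtain ⟨w, hw, u, hu, rfl⟩ := Submodule.mem_sup.1 hv
  refine ⟨⟨u, hu⟩, ?_⟩
  simp only [LinearMap.comp_apply, Submodule.subtype_apply]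
  rw [map_add, Submodule.mkQ_apply, Submodule.mkQ_apply, (Submodule.Quotient.mk_eq_zero _).2 hw, zero_add]

theorem coeff_set_finite {K : Type*} [CommRing K] (p : MvPolynomial (Fin n) K) :
    (Set.range fun β => coeff β p).Finite := by
  refine (((Finset.finite_toSet p.support).image fun β => coeff β p).union
    (Set.finite_singleton 0)).subset ?_
  rintro _ ⟨β, rfl⟩
  by_cases h : β ∈ p.support
  · exact Or.inl ⟨β, h, rfl⟩
  · exact Or.inr (notMem_support_iff.1 h)

theorem descend1 (ε : ℂ) (f : MvPolynomial (Fin n) ℂ) (a : Fin n → ℕ)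
    (hE : ∀ i, X i ^ a i ∈ eSpan ε f (EE n (a i))) :
    ∃ (b : Fin (Module.finrank ℂ (MvPolynomial (Fin n) ℂ ⧸ WW ε f)) → MvPolynomial (Fin n) ℂ)
      (T : Set ℂ), T.Finite ∧
      (∀ c : Fin (Module.finrank ℂ (MvPolynomial (Fin n) ℂ ⧸ WW ε f)) → ℂ,
        ∑ j, c j • b j ∈ WW ε f → c = 0) ∧
      ∀ (Λ : Type) [CommRing Λ] (φ : Λ →+* ℂ), Function.Injective φ → (∀ t ∈ T, t ∈ φ.range) →
        ∀ (ε' : Λ) (f' : MvPolynomial (Fin n) Λ), φ ε' = ε → map φ f' = f →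
        ∃ b' : Fin (Module.finrank ℂ (MvPolynomial (Fin n) ℂ ⧸ WW ε f)) → MvPolynomial (Fin n) Λ,
          (∀ j, map φ (b' j) = b j) ∧
          ∀ v, ∃ c : Fin (Module.finrank ℂ (MvPolynomial (Fin n) ℂ ⧸ WW ε f)) → Λ,
            v - ∑ j, c j • b' j ∈ WW ε' f' := by
  have hfd := quot_finite ε f a hE
  let B := Module.finBasis ℂ (MvPolynomial (Fin n) ℂ ⧸ WW ε f)
  choose b hb using fun j => Submodule.mkQ_surjective _ (B j)
  have hsp : ∀ β : Fin n →₀ ℕ, ∃ (c : Fin (Module.finrank ℂ (MvPolynomial (Fin n) ℂ ⧸ WW ε f)) → ℂ)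
      (q : Fin n → MvPolynomial (Fin n) ℂ),
      monomial β 1 - ∑ j, c j • b j = ∑ i, xiOp ε f i (q i) := by
    intro β
    refine ⟨fun j => B.repr ((WW ε f).mkQ (monomial β 1)) j, ?_⟩
    refine mem_WW.1 ?_
    rw [← Submodule.Quotient.mk_eq_zero, ← Submodule.mkQ_apply, map_sub, map_sum]
    simp only [map_smul, hb]
    rw [B.sum_repr, sub_self]
  choose c q hcq using hsp
  choose e he heq using fun i => mem_eSpan_iff.1 (hE i)
  have hfin : {β : Fin n →₀ ℕ | β.degree ≤ ∑ i, a i}.Finite := by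
    refine (Set.finite_Iic (Finsupp.equivFunOnFinite.symm fun _ => ∑ i, a i)).subset ?_
    intro β hβ i
    have : β.degree ≤ ∑ i, a i := hβ
    have h2 := Finsupp.le_degree i β
    simp; omega
  refine ⟨b, (⋃ j, Set.range fun β => coeff β (b j)) ∪
      (⋃ i, e i '' ((e i).support : Set (Expo n))) ∪
      (⋃ β ∈ {β : Fin n →₀ ℕ | β.degree ≤ ∑ i, a i}, (Set.range (c β) ∪
        ⋃ i, Set.range fun β' => coeff β' (q β i))), ?_, ?_, ?_⟩
  · refine ((Set.finite_iUnion fun j => coeff_set_finite _).union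
      (Set.finite_iUnion fun i => (Finset.finite_toSet _).image _)).union
      (hfin.biUnion fun β _ => (Set.finite_range _).union
        (Set.finite_iUnion fun i => coeff_set_finite _))
  · intro d hd
    rw [← Submodule.Quotient.mk_eq_zero, ← Submodule.mkQ_apply, map_sum] at hd
    simp only [map_smul, hb] at hd
    exact funext (Fintype.linearIndependent_iff.1 B.linearIndependent d hd)
  · intro Λ _ φ hφ hT ε' f' hε hf
    choose b' hb' using fun j => exists_descend_poly φ (b j) (fun β =>
      hT _ (Or.inl (Or.inl (Set.mem_iUnion.2 ⟨j, β, rfl⟩))))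
    refine ⟨b', hb', ?_⟩
    have hE' : ∀ i, X i ^ a i ∈ eSpan ε' f' (EE n (a i)) := by
      intro i
      refine eSpan_descend φ hφ ε' f' _ _ (e i) (he i)
        (fun γ h => hT _ (Or.inl (Or.inr (Set.mem_iUnion.2 ⟨i, γ, h, rfl⟩)))) ?_
      rw [map_pow, map_X, hε, hf]; exact heq i
    have hS := reduce ε' f' a hE' (WW ε' f' ⊔ LinearMap.range (Fintype.linearCombination Λ b'))
      le_sup_left (by
        intro β hβ
        have hβT : ∀ t, t ∈ (Set.range (c β) ∪ ⋃ i, Set.range fun β' => coeff β' (q β i)) →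
          t ∈ φ.range := fun t ht => hT _ (Or.inr (Set.mem_biUnion (show β ∈ {β : Fin n →₀ ℕ | β.degree ≤ ∑ i, a i} from hβ) ht))
        choose c' hc' using fun j => hβT (c β j) (Or.inl ⟨j, rfl⟩)
        choose q' hq' using fun i => exists_descend_poly φ (q β i) (fun β' =>
          hβT _ (Or.inr (Set.mem_iUnion.2 ⟨i, β', rfl⟩)))
        have h1 : monomial β 1 = ∑ i, xiOp ε' f' i (q' i) + ∑ j, c' j • b' j := by
          apply map_injective φ hφ
          rw [map_add, map_sum, map_sum]
          simp only [smul_map', xiOp_map, hc', hq', hb', hε, hf]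
          rw [← hcq β, map_monomial, map_one]; abel
        rw [h1]
        exact add_mem (Submodule.mem_sup_left (mem_WW.2 ⟨q', rfl⟩))
          (Submodule.mem_sup_right ⟨c', by rw [Fintype.linearCombination_apply]⟩))
    intro v
    have hv : v ∈ (⊤ : Submodule Λ _) := trivial
    rw [← hS] at hv
    obtain ⟨w, hw, u, ⟨c, rfl⟩, rfl⟩ := Submodule.mem_sup.1 hv
    refine ⟨c, ?_⟩
    rw [Fintype.linearCombination_apply, add_sub_cancel_right]
    exact hw

theorem thmB (f : MvPolynomial (Fin n) ℂ)
    (h0 : ∀ i : Fin n, ∃ a, X i ^ a ∈ eSpan 0 f (EE n a))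
    (h1 : ∀ i : Fin n, ∃ a, X i ^ a ∈ eSpan 1 f (EE n a)) :
    Module.Finite ℂ (MvPolynomial (Fin n) ℂ ⧸ WW 0 f) ∧
    Module.Finite ℂ (MvPolynomial (Fin n) ℂ ⧸ WW 1 f) ∧
    Module.finrank ℂ (MvPolynomial (Fin n) ℂ ⧸ WW 1 f) =
      Module.finrank ℂ (MvPolynomial (Fin n) ℂ ⧸ WW 0 f) := by
  choose a0 h0 using h0
  choose a1 h1 using h1
  refine ⟨quot_finite 0 f a0 h0, quot_finite 1 f a1 h1, ?_⟩
  obtain ⟨b0, T0, hT0, hi0, hd0⟩ := descend1 0 f a0 h0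
  obtain ⟨b1, T1, hT1, hi1, hd1⟩ := descend1 1 f a1 h1
  obtain ⟨Λ, _, φ, hφ, hft, hr⟩ := exists_fg_subring
    ((Set.range fun β => coeff β f) ∪ (T0 ∪ T1)) ((coeff_set_finite f).union (hT0.union hT1))
  obtain ⟨f', hf'⟩ := exists_descend_poly φ f (fun β => hr _ (Or.inl ⟨β, rfl⟩))
  obtain ⟨b0', hb0, hs0⟩ := hd0 Λ φ hφ (fun t ht => hr t (Or.inr (Or.inl ht))) 0 f' (map_zero _) hf'
  obtain ⟨b1', hb1, hs1⟩ := hd1 Λ φ hφ (fun t ht => hr t (Or.inr (Or.inr ht))) 1 f' (map_one _) hf'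
  have : Nontrivial Λ := φ.domain_nontrivial
  obtain ⟨M, hM⟩ := Ideal.exists_maximal Λ
  obtain ⟨κ, _, q, hq, -⟩ := exists_residue M hM
  obtain ⟨p, hp, _, _⟩ := field_finiteType_int hft κ q hq
  haveI : Fact p.Prime := ⟨hp⟩
  have e0 := specialize φ hφ q hq 0 f' b0' (by
    intro c hc; refine hi0 c ?_
    simpa only [hb0, hf', map_zero] using hc) hs0
  have e1 := specialize φ hφ q hq 1 f' b1' (by
    intro c hc; refine hi1 c ?_
    simpa only [hb1, hf', map_one] using hc) hs1
  have := count_eq p (map q f')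
  rw [map_zero] at e0
  rw [map_one] at e1
  rw [e0, e1] at this
  exact Nat.pow_right_injective (Finite.one_lt_card) this
end ThmB

end Part11

section Part12
section Koszul
variable {n : ℕ} {S : Type*} [CommRing S] {V : Type*} [AddCommGroup V] [Module S V]

/-- sign -/
def sg (S : Type*) [CommRing S] (s : Finset (Fin n)) (i : Fin n) : S :=
  (-1) ^ (s.filter (fun j => j < i)).card

/-- Koszul differential -/
def DD (x : Fin n → S) (ω : Finset (Fin n) → V) (s : Finset (Fin n)) : V :=
  ∑ i ∈ s, (sg S s i * x i) • ω (s.erase i)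

theorem DD_congr (x : Fin n → S) {ω ω' : Finset (Fin n) → V} {s : Finset (Fin n)}
    (h : ∀ t, t ⊂ s → ω t = ω' t) : DD x ω s = DD x ω' s :=
  Finset.sum_congr rfl fun i hi => by rw [h _ (Finset.erase_ssubset hi)]

theorem DD_add (x : Fin n → S) (ω ω' : Finset (Fin n) → V) (s) :
    DD x (fun t => ω t + ω' t) s = DD x ω s + DD x ω' s := by
  simp [DD, smul_add, Finset.sum_add_distrib]

theorem DD_sub (x : Fin n → S) (ω ω' : Finset (Fin n) → V) (s) :
    DD x (fun t => ω t - ω' t) s = DD x ω s - DD x ω' s := by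
  simp [DD, smul_sub, Finset.sum_sub_distrib]

theorem DD_smul (x : Fin n → S) (c : S) (ω : Finset (Fin n) → V) (s) :
    DD x (fun t => c • ω t) s = c • DD x ω s := by
  simp only [DD, Finset.smul_sum]
  exact Finset.sum_congr rfl fun i _ => smul_comm _ _ _

theorem DD_sum (x : Fin n → S) {ι : Type*} (T : Finset ι) (ω : ι → Finset (Fin n) → V) (s) :
    DD x (fun t => ∑ j ∈ T, ω j t) s = ∑ j ∈ T, DD x (ω j) s := by
  simp only [DD, Finset.smul_sum]
  exact Finset.sum_comm

theorem DD_par (x : Fin n → S) (c : S) (ω : Finset (Fin n) → V) (s) :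
    DD x (fun t => ((-1 : S) ^ t.card * c) • ω t) s = (- (-1) ^ s.card * c) • DD x ω s := by
  simp only [DD, Finset.smul_sum]
  refine Finset.sum_congr rfl fun i hi => ?_
  rw [smul_smul, smul_smul]
  congr 1
  have : s.card = (s.erase i).card + 1 := (Finset.card_erase_add_one hi).symm
  rw [this, pow_succ]; ring

theorem sg_sq (s : Finset (Fin n)) (i : Fin n) : sg S s i * sg S s i = 1 := by
  unfold sg
  rw [← mul_pow]; simp

theorem sg_erase_self (s : Finset (Fin n)) (i : Fin n) : sg S (s.erase i) i = sg S s i := by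
  unfold sg
  congr 2
  ext j; simp only [Finset.mem_filter, Finset.mem_erase]
  constructor
  · tauto
  · rintro ⟨h1, h2⟩; exact ⟨⟨h2.ne, h1⟩, h2⟩

theorem sg_insert_self (s : Finset (Fin n)) (i : Fin n) : sg S (insert i s) i = sg S s i := by
  rw [← sg_erase_self (insert i s), ← sg_erase_self s, Finset.erase_insert_eq_erase]

theorem sg_insert_of_lt (s : Finset (Fin n)) {i j : Fin n} (h : j < i) :
    sg S (insert i s) j = sg S s j := by
  unfold sg
  rw [Finset.filter_insert, if_neg (by exact not_lt.2 h.le)]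

theorem sg_insert_of_gt (s : Finset (Fin n)) {i j : Fin n} (h : i < j) (hi : i ∉ s) :
    sg S (insert i s) j = - sg S s j := by
  unfold sg
  rw [Finset.filter_insert, if_pos h, Finset.card_insert_of_notMem (by simp [hi]), pow_succ]
  ring

theorem DD_insert (x : Fin n → S) (ω : Finset (Fin n) → V) {s : Finset (Fin n)} {i : Fin n}
    (h : ∀ j ∈ s, j < i) :
    DD x ω (insert i s) = DD x (fun t => ω (insert i t)) s + ((-1) ^ s.card * x i) • ω s := by
  have hi : i ∉ s := fun hi => lt_irrefl _ (h i hi)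
  unfold DD
  rw [Finset.sum_insert hi, add_comm, Finset.erase_insert hi]
  congr 1
  · refine Finset.sum_congr rfl fun j hj => ?_
    rw [sg_insert_of_lt _ (h j hj), Finset.erase_insert_of_ne (h j hj).ne']
  · congr 2
    rw [sg_insert_self, sg, Finset.filter_true_of_mem h]

theorem DD_DD (x : Fin n → S) (s : Finset (Fin n)) : ∀ ω : Finset (Fin n) → V,
    DD x (DD x ω) s = 0 := by
  induction s using Finset.induction_on_max with
  | empty => intro ω; simp [DD]
  | insert i s hs ih =>
    intro ω
    rw [DD_insert x _ hs]
    have : DD x (fun t => DD x ω (insert i t)) s = DD x (fun t => DD x (fun t => ω (insert i t)) t +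
        ((-1) ^ t.card * x i) • ω t) s := by
      refine DD_congr x fun t ht => ?_
      exact DD_insert x _ fun j hj => hs j (ht.1 hj)
    rw [this, DD_add, DD_par]
    have h2 := ih (fun t => ω (insert i t))
    rw [show DD x (fun t => DD x (fun t => ω (insert i t)) t) s = 0 from h2, zero_add, ← add_smul]
    simp

theorem koszul (x : Fin n → S) (I : Ideal S)
    (hreg : ∀ (A : Finset (Fin n)) (i : Fin n), i ∉ A → ∀ v : V,
      (∃ w : Fin n → V, x i • v = ∑ j ∈ A, x j • w j) →
      ∃ h : S, h - 1 ∈ I ∧ ∃ w : Fin n → V, h • v = ∑ j ∈ A, x j • w j)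
    (A : Finset (Fin n)) : ∀ ω : Finset (Fin n) → V, ω A = 0 → (∀ s ⊆ A, DD x ω s = 0) →
      ∃ h : S, h - 1 ∈ I ∧ ∃ η : Finset (Fin n) → V, ∀ s ⊆ A, h • ω s = DD x η s := by
  have hmul : ∀ a b : S, a - 1 ∈ I → b - 1 ∈ I → a * b - 1 ∈ I := by
    intro a b ha hb
    have : a * b - 1 = a * (b - 1) + (a - 1) := by ring
    rw [this]; exact add_mem (I.mul_mem_left _ hb) ha
  induction A using Finset.induction_on_max with
  | empty =>
    intro ω h0 _
    refine ⟨1, by simp, 0, fun s hs => ?_⟩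
    rw [Finset.subset_empty.1 hs, h0]; simp [DD]
  | insert i A hA ih =>
    intro ω hω hd
    have hi : i ∉ A := fun hi => lt_irrefl _ (hA i hi)
    have hlt : ∀ s ⊆ A, ∀ j ∈ s, j < i := fun s hs j hj => hA j (hs hj)
    have hdA : ∀ s ⊆ A, DD x ω s = 0 := fun s hs => hd s (hs.trans (Finset.subset_insert _ _))
    -- first step
    obtain ⟨h, hh, w, hw⟩ := hreg A i hi (ω A) (by
      have := hd _ (Finset.Subset.refl _)
      rw [DD_insert x _ hA] at this
      refine ⟨fun j => (-((-1) ^ A.card) * sg S A j) • ω (insert i (A.erase j)), ?_⟩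
      have h3 := congrArg (fun u => ((-1 : S) ^ A.card) • u) this
      simp only [smul_add, smul_smul, smul_zero, ← mul_assoc, ← mul_pow] at h3
      simp only [mul_neg, neg_mul, neg_neg, one_mul, one_pow] at h3
      rw [add_comm, add_eq_zero_iff_eq_neg] at h3
      rw [h3, DD, Finset.smul_sum, ← Finset.sum_neg_distrib]
      refine Finset.sum_congr rfl fun j _ => ?_
      rw [smul_smul, smul_smul, ← neg_smul]
      congr 1; ring)
    let η0 : Finset (Fin n) → V := fun t => ∑ j ∈ A, if t = A.erase j then sg S A j • w j else 0
    have hη0 : DD x η0 A = h • ω A := by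
      rw [hw]
      refine Finset.sum_congr rfl fun j hj => ?_
      have : η0 (A.erase j) = sg S A j • w j := by
        show (∑ j' ∈ A, _) = _
        rw [Finset.sum_eq_single j]
        · simp
        · intro j' hj' hne
          rw [if_neg]
          intro heq
          have : j' ∈ A.erase j := Finset.mem_erase.2 ⟨hne, hj'⟩
          rw [heq] at this
          simp at this
        · intro h; exact absurd hj h
      rw [this, smul_smul]
      congr 1
      rw [mul_right_comm, sg_sq, one_mul]
    obtain ⟨h', hh', η1, hη1⟩ := ih (fun t => h • ω t - DD x η0 t) (by simp [hη0]) (by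
      intro s hs
      rw [DD_sub, DD_smul, hdA s hs, smul_zero, zero_sub, neg_eq_zero]
      exact DD_DD x s η0)
    let η2 : Finset (Fin n) → V := fun t => if t ⊂ A then h' • η0 t + η1 t else 0
    have hη2 : ∀ s ⊆ A, DD x η2 s = (h' * h) • ω s := by
      intro s hs
      have : DD x η2 s = DD x (fun t => h' • η0 t + η1 t) s := by
        refine DD_congr x fun t ht => if_pos (ht.trans_subset hs)
      rw [this, DD_add, DD_smul, ← hη1 s hs, smul_sub, smul_smul]
      abel
    have hη2i : ∀ t, i ∈ t → η2 t = 0 := fun t ht => if_neg fun hh => hi (hh.1 ht)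
    let ω2 : Finset (Fin n) → V := fun t => (h' * h) • ω t - DD x η2 t
    have hω2A : ∀ s ⊆ A, ω2 s = 0 := fun s hs => by simp [ω2, hη2 s hs]
    have hω2d : ∀ s ⊆ insert i A, DD x ω2 s = 0 := by
      intro s hs
      show DD x (fun t => (h' * h) • ω t - DD x η2 t) s = 0
      rw [DD_sub, DD_smul, hd s hs, smul_zero, zero_sub, neg_eq_zero]
      exact DD_DD x s η2
    have hω2t : ω2 (insert i A) = 0 := by
      show (h' * h) • ω _ - DD x η2 _ = 0
      rw [hω, DD_insert x _ hA, show η2 A = 0 from if_neg (fun h => h.2 subset_rfl), smul_zero, smul_zero]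
      have : DD x (fun t => η2 (insert i t)) A = 0 := by
        refine Finset.sum_eq_zero fun j _ => ?_
        show (sg S A j * x j) • η2 (insert i (A.erase j)) = 0
        rw [hη2i _ (Finset.mem_insert_self _ _), smul_zero]
      rw [this]; simp
    obtain ⟨h'', hh'', γ, hγ⟩ := ih (fun t => ω2 (insert i t)) hω2t (by
      intro s hs
      have := hω2d (insert i s) (Finset.insert_subset_insert _ hs)
      rwa [DD_insert x _ (hlt s hs), hω2A s hs, smul_zero, add_zero] at this)
    let η3 : Finset (Fin n) → V := fun t => if i ∈ t then γ (t.erase i) else 0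
    have hη3 : ∀ s ⊆ insert i A, DD x η3 s = h'' • ω2 s := by
      intro s hs
      by_cases his : i ∈ s
      · obtain ⟨s', hs', rfl⟩ : ∃ s', s' ⊆ A ∧ insert i s' = s :=
          ⟨s.erase i, by rwa [← Finset.subset_insert_iff], Finset.insert_erase his⟩
        have hi' : i ∉ s' := fun h => hi (hs' h)
        rw [DD_insert x _ (hlt s' hs'), show η3 s' = 0 from if_neg hi', smul_zero, add_zero]
        have h5 := hγ s' hs'
        rw [h5]
        refine DD_congr x fun t ht => ?_
        show (if i ∈ insert i t then γ ((insert i t).erase i) else 0) = γ t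
        rw [if_pos (Finset.mem_insert_self _ _), Finset.erase_insert (fun h => hi' (ht.1 h))]
      · have hsA : s ⊆ A := by
          rwa [Finset.subset_insert_iff_of_notMem his] at hs
        rw [hω2A s hsA, smul_zero]
        refine Finset.sum_eq_zero fun j _ => ?_
        rw [show η3 (s.erase j) = 0 from if_neg (fun h => his (Finset.mem_of_mem_erase h)), smul_zero]
    refine ⟨h'' * (h' * h), hmul _ _ hh'' (hmul _ _ hh' hh), fun t => h'' • η2 t + η3 t, ?_⟩
    intro s hs
    rw [DD_add, DD_smul, hη3 s hs, ← smul_add, mul_smul]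
    congr 1
    show _ = DD x η2 s + ((h' * h) • ω s - DD x η2 s)
    abel

/-- contraction -/
def HH (S : Type*) [CommRing S] [Module S V] (j : Fin n) (ω : Finset (Fin n) → V)
    (s : Finset (Fin n)) : V :=
  if j ∈ s then 0 else sg S s j • ω (insert j s)

theorem DD_HH (x : Fin n → S) (j : Fin n) (ω : Finset (Fin n) → V) (s : Finset (Fin n)) :
    DD x (HH S j ω) s + HH S j (DD x ω) s = x j • ω s := by
  by_cases hj : j ∈ s
  · rw [show HH S j (DD x ω) s = 0 from if_pos hj, add_zero, DD, Finset.sum_eq_single j]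
    · rw [HH, if_neg (Finset.notMem_erase _ _), Finset.insert_erase hj, sg_erase_self, smul_smul,
        mul_right_comm, sg_sq, one_mul]
    · intro i hi hne
      rw [HH, if_pos (Finset.mem_erase.2 ⟨hne.symm, hj⟩), smul_zero]
    · intro h; exact absurd hj h
  · rw [show HH S j (DD x ω) s = _ from if_neg hj, DD, DD, Finset.sum_insert hj, smul_add, smul_smul,
      sg_insert_self, ← mul_assoc, sg_sq, one_mul, Finset.erase_insert hj, add_left_comm,
      add_eq_left, Finset.smul_sum, ← Finset.sum_add_distrib]
    refine Finset.sum_eq_zero fun i hi => ?_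
    have hne : j ≠ i := fun h => hj (h ▸ hi)
    rw [HH, if_neg (fun h => hj (Finset.mem_of_mem_erase h)), Finset.erase_insert_of_ne hne,
      smul_smul, smul_smul, ← add_smul]
    have : sg S s i * sg S (s.erase i) j + sg S s j * sg S (insert j s) i = 0 := by
      rcases lt_or_gt_of_ne hne with h | h
      · rw [sg_insert_of_gt s h hj]
        have h1 := sg_insert_of_lt (S := S) (s.erase i) h
        rw [Finset.insert_erase hi] at h1
        rw [h1]; ring
      · rw [sg_insert_of_lt s h]
        have h1 := sg_insert_of_gt (S := S) (s.erase i) h (Finset.notMem_erase _ _)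
        rw [Finset.insert_erase hi] at h1
        rw [h1]; ring
    have h2 : sg S s i * x i * sg S (s.erase i) j + sg S s j * (sg S (insert j s) i * x i) = 0 := by
      linear_combination x i * this
    rw [h2, zero_smul]

theorem koszul_exact (x : Fin n → S)
    (hreg : ∀ (A : Finset (Fin n)) (i : Fin n), i ∉ A → ∀ v : V,
      (∃ w : Fin n → V, x i • v = ∑ j ∈ A, x j • w j) →
      ∃ h : S, h - 1 ∈ Ideal.span (Set.range x) ∧ ∃ w : Fin n → V, h • v = ∑ j ∈ A, x j • w j)
    (ω : Finset (Fin n) → V) (h0 : ω Finset.univ = 0) (hd : ∀ s, DD x ω s = 0) :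
    ∃ η, ∀ s, ω s = DD x η s := by
  obtain ⟨h, hh, η, hη⟩ := koszul x _ hreg Finset.univ ω h0 (fun s _ => hd s)
  rw [Ideal.mem_span_range_iff_exists_fun] at hh
  obtain ⟨c, hc⟩ := hh
  refine ⟨fun t => η t - ∑ j, c j • HH S j ω t, fun s => ?_⟩
  rw [DD_sub, DD_sum, ← hη s (Finset.subset_univ _)]
  have h1 : ∀ j, DD x (fun t => c j • HH S j ω t) s = (c j * x j) • ω s := by
    intro j
    rw [DD_smul, mul_smul, ← DD_HH x j ω s]
    have : HH S j (DD x ω) s = 0 := by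
      unfold HH
      split_ifs
      · rfl
      · rw [hd, smul_zero]
    rw [this, add_zero]
  simp only [h1]
  rw [← Finset.sum_smul, hc, sub_smul, one_smul]
  abel
end Koszul

end Part12

section Part13
section Reg
variable {n : ℕ}

/-- polynomials as a module over the ring of operators `ξ`. -/
def VV (_f : MvPolynomial (Fin n) ℂ) : Type := MvPolynomial (Fin n) ℂ

instance VV.grp (f : MvPolynomial (Fin n) ℂ) : AddCommGroup (VV f) :=
  inferInstanceAs (AddCommGroup (MvPolynomial (Fin n) ℂ))

instance VV.mdl (f : MvPolynomial (Fin n) ℂ) : Module (MvPolynomial (Fin n) ℂ) (VV f) :=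
  Module.compHom (MvPolynomial (Fin n) ℂ) (rho 1 f).toRingHom

/-- identity -/
def toVV (f : MvPolynomial (Fin n) ℂ) : MvPolynomial (Fin n) ℂ →+ VV f := AddMonoidHom.id _

theorem toVV_surj (f : MvPolynomial (Fin n) ℂ) : Function.Surjective (toVV f) := fun v => ⟨v, rfl⟩

theorem toVV_inj (f : MvPolynomial (Fin n) ℂ) : Function.Injective (toVV f) := fun _ _ h => h

theorem VV_smul (f h v : MvPolynomial (Fin n) ℂ) : h • toVV f v = toVV f (rho 1 f h v) := rfl

theorem VV_X (f v : MvPolynomial (Fin n) ℂ) (i) : (X i : MvPolynomial (Fin n) ℂ) • toVV f v =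
    toVV f (xiOp 1 f i v) := by rw [VV_smul, rho_X]

theorem VV_C (f v : MvPolynomial (Fin n) ℂ) (c : ℂ) : (C c : MvPolynomial (Fin n) ℂ) • toVV f v =
    toVV f (c • v) := by rw [VV_smul, rho_C]

theorem eMon_VV (f : MvPolynomial (Fin n) ℂ) (γ : Expo n) : toVV f (eMon 1 f γ) =
    (monomial γ.1 1 : MvPolynomial (Fin n) ℂ) • toVV f (monomial γ.2 1) := rfl

theorem eSpan_VV (f : MvPolynomial (Fin n) ℂ) (A : Set (Expo n))
    (P : Submodule (MvPolynomial (Fin n) ℂ) (VV f)) (h : ∀ γ ∈ A, toVV f (eMon 1 f γ) ∈ P)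
    {v} (hv : v ∈ eSpan 1 f A) : toVV f v ∈ P := by
  unfold eSpan at hv
  induction hv using Submodule.span_induction with
  | mem x hx => obtain ⟨γ, hγ, rfl⟩ := hx; exact h γ hγ
  | zero => rw [map_zero]; exact zero_mem _
  | add x y _ _ hx hy => rw [map_add]; exact add_mem hx hy
  | smul a x _ hx => rw [← VV_C]; exact P.smul_mem _ hx

/-- the filtration -/
def GG (f : MvPolynomial (Fin n) ℂ) (j : ℕ) : Submodule (MvPolynomial (Fin n) ℂ) (VV f) :=
  Submodule.span _ ((fun β => toVV f (monomial β 1)) '' {β : Fin n →₀ ℕ | β.degree ≤ j})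

theorem GG_fg (f : MvPolynomial (Fin n) ℂ) (j : ℕ) : (GG f j).FG := by
  refine Submodule.fg_span (Set.Finite.image _ ?_)
  refine (Set.finite_Iic (Finsupp.equivFunOnFinite.symm fun _ => j)).subset ?_
  intro β hβ i
  have : β.degree ≤ j := hβ
  have h2 := Finsupp.le_degree i β
  simp; omega

theorem mem_GG (f : MvPolynomial (Fin n) ℂ) {j : ℕ} {β : Fin n →₀ ℕ} (h : β.degree ≤ j) :
    toVV f (monomial β 1) ∈ GG f j := Submodule.subset_span ⟨β, h, rfl⟩

theorem exists_mem_GG (f v : MvPolynomial (Fin n) ℂ) : ∃ j, toVV f v ∈ GG f j := by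
  refine ⟨v.support.sup Finsupp.degree, ?_⟩
  rw [v.as_sum, map_sum]
  rw [← v.as_sum]
  refine sum_mem fun β hβ => ?_
  have : monomial β (coeff β v) = coeff β v • monomial β (1:ℂ) := by simp [smul_monomial]
  rw [this, ← VV_C]
  exact Submodule.smul_mem _ _ (mem_GG f (Finset.le_sup (f := Finsupp.degree) hβ))

theorem monomial_mem_m (β : Fin n →₀ ℕ) (h : β ≠ 0) :
    (monomial β 1 : MvPolynomial (Fin n) ℂ) ∈ Ideal.span (Set.range X) := by
  obtain ⟨i, hi⟩ := Finsupp.ne_iff.1 h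
  have h1 : β = (β - Finsupp.single i 1) + Finsupp.single i 1 := by
    refine (tsub_add_cancel_of_le ?_).symm
    rw [Finsupp.single_le_iff]
    simp at hi; omega
  have : (monomial β 1 : MvPolynomial (Fin n) ℂ) = monomial (β - Finsupp.single i 1) 1 * X i := by
    rw [X, monomial_mul, ← h1, one_mul]
  rw [this]
  exact Ideal.mul_mem_left _ _ (Ideal.subset_span ⟨i, rfl⟩)

theorem GG_step (f : MvPolynomial (Fin n) ℂ) (a : Fin n → ℕ)
    (hE : ∀ i, X i ^ a i ∈ eSpan 1 f (EE n (a i))) (j : ℕ) :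
    GG f j ≤ GG f (∑ i, a i) ⊔ (Ideal.span (Set.range X) : Ideal (MvPolynomial (Fin n) ℂ)) • GG f j := by
  have key : ∀ d, ∀ β : Fin n →₀ ℕ, β.degree = d → β.degree ≤ j → toVV f (monomial β 1) ∈
      GG f (∑ i, a i) ⊔ (Ideal.span (Set.range X) : Ideal (MvPolynomial (Fin n) ℂ)) • GG f j := by
    intro d
    induction d using Nat.strong_induction_on with
    | _ d ih =>
    intro β hβ hj
    by_cases h : β.degree ≤ ∑ i, a i
    · exact Submodule.mem_sup_left (mem_GG f h)
    refine eSpan_VV f _ _ ?_ (pigeon 1 f a hE β (by omega))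
    intro γ hγ
    rw [eMon_VV]
    rcases hγ with h2 | ⟨h2, h3⟩
    · exact Submodule.smul_mem _ _ (ih _ (by omega) _ rfl (by omega))
    · exact Submodule.mem_sup_right (Submodule.smul_mem_smul (monomial_mem_m _ h2)
        (mem_GG f (by omega)))
  refine Submodule.span_le.2 ?_
  rintro _ ⟨β, hβ, rfl⟩
  exact key _ β rfl hβ

theorem exists_h (f : MvPolynomial (Fin n) ℂ) (a : Fin n → ℕ)
    (hE : ∀ i, X i ^ a i ∈ eSpan 1 f (EE n (a i))) (v : VV f) :
    ∃ h : MvPolynomial (Fin n) ℂ, h - 1 ∈ Ideal.span (Set.range X) ∧ h • v ∈ GG f (∑ i, a i) := by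
  obtain ⟨j, hj⟩ := exists_mem_GG f v
  obtain ⟨h, hh, hle⟩ := Submodule.exists_sub_one_mem_and_smul_le_of_fg_of_le_sup (GG_fg f j) le_rfl
    (GG_step f a hE j)
  exact ⟨h, hh, hle (Submodule.smul_mem_pointwise_smul _ _ _ hj)⟩

theorem xiOp_mul (f : MvPolynomial (Fin n) ℂ) (i) (p v : MvPolynomial (Fin n) ℂ) :
    xiOp 1 f i (p * v) = p * xiOp 1 f i v + pderiv i p * v := by
  rw [xiOp_apply, xiOp_apply, pderiv_mul, one_smul, one_smul]; ring

/-- sum of images of `ξ_j`, `j ∈ A` -/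
def PP (f : MvPolynomial (Fin n) ℂ) (A : Finset (Fin n)) :
    Submodule (MvPolynomial (Fin n) ℂ) (VV f) :=
  LinearMap.range (∑ j ∈ A, (LinearMap.lsmul (MvPolynomial (Fin n) ℂ) (VV f) (X j)) ∘ₗ
    (LinearMap.proj j : (Fin n → VV f) →ₗ[MvPolynomial (Fin n) ℂ] VV f))

theorem mem_PP {f : MvPolynomial (Fin n) ℂ} {A : Finset (Fin n)} {v : VV f} :
    v ∈ PP f A ↔ ∃ w : Fin n → VV f, v = ∑ j ∈ A, (X j : MvPolynomial (Fin n) ℂ) • w j := by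
  unfold PP
  rw [LinearMap.mem_range]
  simp [LinearMap.sum_apply, eq_comm]

theorem X_mul_PP (f : MvPolynomial (Fin n) ℂ) (A : Finset (Fin n)) (i : Fin n) (hi : i ∉ A)
    (v : MvPolynomial (Fin n) ℂ) (hv : toVV f v ∈ PP f A) : toVV f (X i * v) ∈ PP f A := by
  obtain ⟨w, hw⟩ := mem_PP.1 hv
  choose w' hw' using fun j => toVV_surj f (w j)
  have hv' : v = ∑ j ∈ A, xiOp 1 f j (w' j) := by
    apply toVV_inj f
    rw [hw, map_sum]
    refine Finset.sum_congr rfl fun j _ => ?_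
    rw [← VV_X, hw']
  refine mem_PP.2 ⟨fun j => toVV f (X i * w' j), ?_⟩
  rw [hv', Finset.mul_sum, map_sum]
  refine Finset.sum_congr rfl fun j hj => ?_
  have hne : i ≠ j := fun h => hi (h ▸ hj)
  rw [VV_X, X_mul_xiOp, if_neg hne, sub_zero]

theorem X_pow_mul_PP (f : MvPolynomial (Fin n) ℂ) (A : Finset (Fin n)) (i : Fin n) (hi : i ∉ A)
    (v : MvPolynomial (Fin n) ℂ) (hv : toVV f v ∈ PP f A) (m : ℕ) :
    toVV f (X i ^ m * v) ∈ PP f A := by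
  induction m with
  | zero => simpa using hv
  | succ m ih => rw [pow_succ', mul_assoc]; exact X_mul_PP f A i hi _ ih

theorem weyl_PP (f : MvPolynomial (Fin n) ℂ) (A : Finset (Fin n)) (i : Fin n) (hi : i ∉ A)
    (v : MvPolynomial (Fin n) ℂ) (hv : (X i : MvPolynomial (Fin n) ℂ) • toVV f v ∈ PP f A) (J : ℕ) :
    (X i ^ J : MvPolynomial (Fin n) ℂ) • toVV f (X i ^ J * v) - J.factorial • toVV f v ∈ PP f A := by
  induction J with
  | zero => simp
  | succ J ih =>
    have h1 : (X i : MvPolynomial (Fin n) ℂ) • toVV f (X i ^ (J + 1) * v) -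
        (J + 1) • toVV f (X i ^ J * v) ∈ PP f A := by
      rw [VV_X, xiOp_mul, ← map_nsmul, ← map_sub]
      rw [VV_X] at hv
      convert X_pow_mul_PP f A i hi _ hv (J + 1) using 2
      rw [pderiv_pow, pderiv_X_self]
      simp [nsmul_eq_mul]; ring
    have h2 := add_mem ((PP f A).smul_mem (X i ^ J : MvPolynomial (Fin n) ℂ) h1)
      (nsmul_mem ih (J + 1))
    convert h2 using 1
    rw [smul_sub, smul_sub, pow_succ, mul_smul, Nat.factorial_succ, mul_smul,
      smul_comm (X i ^ J : MvPolynomial (Fin n) ℂ) (J + 1)]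
    abel

theorem regular (f : MvPolynomial (Fin n) ℂ) (a : Fin n → ℕ)
    (hE : ∀ i, X i ^ a i ∈ eSpan 1 f (EE n (a i))) (A : Finset (Fin n)) (i : Fin n) (hi : i ∉ A)
    (v : VV f) (hv : (X i : MvPolynomial (Fin n) ℂ) • v ∈ PP f A) :
    ∃ h : MvPolynomial (Fin n) ℂ, h - 1 ∈ Ideal.span (Set.range X) ∧ h • v ∈ PP f A := by
  obtain ⟨v, rfl⟩ := toVV_surj f v
  have hN : IsNoetherian (MvPolynomial (Fin n) ℂ) (GG f (∑ i, a i)) :=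
    isNoetherian_of_fg_of_noetherian _ (GG_fg f _)
  let F : ℕ →o Submodule (MvPolynomial (Fin n) ℂ) (GG f (∑ i, a i)) :=
    ⟨fun J => ((PP f A).comap (LinearMap.lsmul _ _ (X i ^ J))).comap (GG f (∑ i, a i)).subtype, by
      refine monotone_nat_of_le_succ fun J => ?_
      intro u hu
      simp only [Submodule.mem_comap, LinearMap.lsmul_apply] at hu ⊢
      rw [pow_succ', mul_smul]
      exact (PP f A).smul_mem _ hu⟩
  obtain ⟨J, hJ⟩ := monotone_stabilizes_iff_noetherian.2 hN F
  obtain ⟨h, hh, hG⟩ := exists_h f a hE (toVV f (X i ^ J * v))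
  refine ⟨h, hh, ?_⟩
  have hw := weyl_PP f A i hi v hv J
  have h1 : (⟨_, hG⟩ : GG f (∑ i, a i)) ∈ F (J + 1) := by
    show (X i ^ (J + 1) : MvPolynomial (Fin n) ℂ) • h • toVV f (X i ^ J * v) ∈ PP f A
    rw [smul_comm, pow_succ', mul_smul]
    refine (PP f A).smul_mem _ ?_
    have h3 := add_mem ((PP f A).smul_mem (X i : MvPolynomial (Fin n) ℂ) hw)
      (nsmul_mem hv J.factorial)
    rwa [smul_sub, smul_comm (X i : MvPolynomial (Fin n) ℂ) J.factorial, sub_add_cancel] at h3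
  rw [← hJ (J + 1) (Nat.le_succ J)] at h1
  have h2 : (X i ^ J : MvPolynomial (Fin n) ℂ) • h • toVV f (X i ^ J * v) ∈ PP f A := h1
  have h4 := sub_mem h2 ((PP f A).smul_mem h hw)
  rw [smul_sub, smul_comm (X i ^ J : MvPolynomial (Fin n) ℂ) h, sub_sub_cancel] at h4
  have h5 := (PP f A).smul_mem (C ((J.factorial : ℂ)⁻¹)) h4
  rw [← Nat.cast_smul_eq_nsmul (MvPolynomial (Fin n) ℂ), smul_smul, smul_smul] at h5
  convert h5 using 2
  have : (C ((J.factorial : ℂ)⁻¹) : MvPolynomial (Fin n) ℂ) * (J.factorial : MvPolynomial (Fin n) ℂ) = 1 := by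
    rw [← map_natCast (C : ℂ →+* MvPolynomial (Fin n) ℂ), ← map_mul, inv_mul_cancel₀, map_one]
    exact_mod_cast J.factorial_ne_zero
  linear_combination (-h) * this
end Reg

end Part13

section Part14
section Fin
variable {n : ℕ}

theorem toVV_dTwist (f : MvPolynomial (Fin n) ℂ) (ω : Form n ℂ) (s : Finset (Fin n)) :
    toVV f (dTwist (grad f) ω s) =
      DD (X : Fin n → MvPolynomial (Fin n) ℂ) (fun t => toVV f (ω t)) s := by
  show toVV f (∑ i ∈ s, sgn ℂ s i * (pderiv i (ω (s.erase i)) + grad f i * ω (s.erase i))) = _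
  rw [map_sum]
  refine Finset.sum_congr rfl fun i _ => ?_
  rw [mul_smul, VV_X, xiOp_apply, one_smul]
  unfold sgn sg grad
  rcases neg_one_pow_eq_or (MvPolynomial (Fin n) ℂ) (s.filter fun j => j < i).card with h | h
  · rw [h, one_mul, one_smul]
  · rw [h, neg_smul, one_smul, neg_mul, one_mul, map_neg]

theorem exact_form (f : MvPolynomial (Fin n) ℂ)
    (hE : ∀ i : Fin n, ∃ a, X i ^ a ∈ eSpan 1 f (EE n a)) (ω : Form n ℂ)
    (h0 : ω Finset.univ = 0) (hd : dTwist (grad f) ω = 0) : ∃ η, dTwist (grad f) η = ω := by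
  choose a hE using hE
  obtain ⟨η, hη⟩ := koszul_exact (V := VV f) (X : Fin n → MvPolynomial (Fin n) ℂ) (by
    intro A i hi v hv
    obtain ⟨h, hh, h2⟩ := regular f a hE A i hi v (mem_PP.2 hv)
    exact ⟨h, hh, mem_PP.1 h2⟩) (fun t => toVV f (ω t)) (by rw [h0, map_zero]) (by
      intro s
      rw [← toVV_dTwist, hd]; exact map_zero _)
  choose η' hη' using fun s => toVV_surj f (η s)
  refine ⟨η', ?_⟩
  funext s
  apply toVV_inj f
  rw [toVV_dTwist]
  simp only [hη']
  exact (hη s).symm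

theorem low_degree (f : MvPolynomial (Fin n) ℂ)
    (hE : ∀ i : Fin n, ∃ a, X i ^ a ∈ eSpan 1 f (EE n a)) (k : ℕ) (hk : k ≠ n) :
    Subsingleton (Hf f k) := by
  rw [Submodule.Quotient.subsingleton_iff, eq_top_iff]
  rintro ⟨ω, hω, hd⟩ -
  show ω ∈ cobounds (grad f) k
  have h0 : ω Finset.univ = 0 := hω _ (by simpa using hk.symm)
  obtain ⟨η, hη⟩ := exact_form f hE ω h0 hd
  let η' : Form n ℂ := fun s => if s.card + 1 = k then η s else 0
  have hη' : dTwist (grad f) η' = ω := by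
    funext s
    by_cases hs : s.card = k
    · rw [← hη]
      refine Finset.sum_congr rfl fun i hi => ?_
      have : η' (s.erase i) = η (s.erase i) := if_pos (by rw [Finset.card_erase_add_one hi, hs])
      rw [this]
    · rw [hω s hs]
      refine Finset.sum_eq_zero fun i hi => ?_
      have : η' (s.erase i) = 0 := if_neg (by rwa [Finset.card_erase_add_one hi])
      rw [this]; simp
  refine ⟨η', ?_, hη'⟩
  intro s hs
  exact if_neg (by omega)

theorem sgn_mul (s : Finset (Fin n)) (i : Fin n) (c p : MvPolynomial (Fin n) ℂ) :
    sgn ℂ s i * (pderiv i p + c * p) =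
      pderiv i (sgn ℂ s i * p) + c * (sgn ℂ s i * p) := by
  unfold sgn
  rcases neg_one_pow_eq_or (MvPolynomial (Fin n) ℂ) (s.filter fun j => j < i).card with h | h
  · rw [h]; simp
  · rw [h]; simp; ring

theorem sgn_sq (s : Finset (Fin n)) (i : Fin n) : sgn ℂ s i * sgn ℂ s i = 1 := by
  unfold sgn
  rw [← mul_pow]; simp

theorem dTwist_univ (f : MvPolynomial (Fin n) ℂ) (η : Form n ℂ) :
    dTwist (grad f) η Finset.univ =
      ∑ i, xiOp 1 f i (sgn ℂ Finset.univ i * η (Finset.univ.erase i)) := by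
  show (∑ i, sgn ℂ Finset.univ i * (pderiv i (η (Finset.univ.erase i)) + grad f i * η (Finset.univ.erase i))) = _
  refine Finset.sum_congr rfl fun i _ => ?_
  rw [sgn_mul, xiOp_apply, one_smul]; rfl

theorem top_degree (hn : 0 < n) (f : MvPolynomial (Fin n) ℂ) :
    Nonempty (Hf f n ≃ₗ[ℂ] (MvPolynomial (Fin n) ℂ ⧸ WW 1 f)) := by
  let g : cocycles (grad f) n →ₗ[ℂ] (MvPolynomial (Fin n) ℂ ⧸ WW 1 f) :=
    (WW 1 f).mkQ ∘ₗ (LinearMap.proj Finset.univ) ∘ₗ (cocycles (grad f) n).subtype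
  have hg : ∀ ω, g ω = (WW 1 f).mkQ (ω.1 Finset.univ) := fun _ => rfl
  have hsurj : Function.Surjective g := by
    intro y
    obtain ⟨v, rfl⟩ := Submodule.mkQ_surjective _ y
    refine ⟨⟨fun s => if s = Finset.univ then v else 0, ?_, ?_⟩, ?_⟩
    · intro s hs
      refine if_neg ?_
      rintro rfl; simp at hs
    · refine LinearMap.mem_ker.2 ?_
      funext s
      refine Finset.sum_eq_zero fun i hi => ?_
      beta_reduce
      rw [if_neg]
      · simp
      · intro h
        have := Finset.mem_univ i
        rw [← h] at this; simp at this
    · rw [hg]; simp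
  have hker : LinearMap.ker g = Submodule.comap (cocycles (grad f) n).subtype (cobounds (grad f) n) := by
    ext ⟨ω, hω, hd⟩
    rw [LinearMap.mem_ker, hg, Submodule.mkQ_apply, Submodule.Quotient.mk_eq_zero]
    show ω Finset.univ ∈ WW 1 f ↔ ω ∈ cobounds (grad f) n
    constructor
    · intro h
      obtain ⟨q, hq⟩ := mem_WW.1 h
      let η : Form n ℂ := fun t => ∑ i, if t = Finset.univ.erase i then sgn ℂ Finset.univ i * q i else 0
      have hηi : ∀ i, η (Finset.univ.erase i) = sgn ℂ Finset.univ i * q i := by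
        intro i
        show (∑ i', _) = _
        rw [Finset.sum_eq_single i]
        · simp
        · intro j _ hne
          rw [if_neg]
          intro heq
          have : j ∈ Finset.univ.erase i := Finset.mem_erase.2 ⟨hne, Finset.mem_univ _⟩
          rw [heq] at this
          simp at this
        · simp
      have hη0 : η ∈ formDeg n ℂ (n - 1) := by
        intro s hs
        refine Finset.sum_eq_zero fun i _ => if_neg ?_
        rintro rfl
        rw [Finset.card_erase_of_mem (Finset.mem_univ _)] at hs
        simp at hs
      refine ⟨η, hη0, ?_⟩
      funext s
      by_cases hs : s = Finset.univ
      · subst hs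
        rw [dTwist_univ, hq]
        refine Finset.sum_congr rfl fun i _ => ?_
        rw [hηi, ← mul_assoc, sgn_sq, one_mul]
      · have hsc : s.card ≠ n := by
          intro h; apply hs
          rw [← Finset.card_eq_iff_eq_univ, h, Fintype.card_fin]
        rw [hω s hsc]
        refine Finset.sum_eq_zero fun i hi => ?_
        rw [hη0 (s.erase i) (by
          have := Finset.card_erase_add_one hi
          omega)]
        simp
    · rintro ⟨η, -, rfl⟩
      rw [dTwist_univ]
      exact mem_WW.2 ⟨_, rfl⟩
  exact ⟨(Submodule.quotEquivOfEq _ _ hker.symm).trans (g.quotKerEquivOfSurjective hsurj)⟩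

theorem WW_zero (f : MvPolynomial (Fin n) ℂ) :
    WW 0 f = (Ideal.span (Set.range fun i => pderiv i f)).restrictScalars ℂ := by
  ext v
  rw [mem_WW, Submodule.restrictScalars_mem, Ideal.mem_span_range_iff_exists_fun]
  refine exists_congr fun q => ?_
  rw [eq_comm]
  refine Eq.congr (Finset.sum_congr rfl fun i _ => ?_) rfl
  rw [xiOp_apply, zero_smul, zero_add, mul_comm]

theorem final {n : ℕ} (hn : 0 < n)
    (f : MvPolynomial (Fin n) ℂ)
    (htame : ∃ C δ : ℝ, 0 < C ∧ 0 < δ ∧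
      ∀ x : Fin n → ℂ,
        C ≤ Real.sqrt (∑ i, ‖x i‖ ^ 2) →
        δ ≤ Real.sqrt (∑ i, ‖eval x (pderiv i f)‖ ^ 2)) :
    (∀ k : ℕ, k ≠ n → Subsingleton (Hf f k)) ∧
    Nonempty
      ((Hf f n) ≃ₗ[ℂ]
        (MvPolynomial (Fin n) ℂ ⧸
          Ideal.span (Set.range fun i => pderiv i f))) ∧
    Module.rank ℂ (Hf f n) =
      Module.rank ℂ
        (MvPolynomial (Fin n) ℂ ⧸
          Ideal.span (Set.range fun i => pderiv i f)) := by
  have h0 : ∀ i : Fin n, ∃ a, X i ^ a ∈ eSpan 0 f (EE n a) := fun i => tame_step f i htame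
  have h1 : ∀ i : Fin n, ∃ a, X i ^ a ∈ eSpan 1 f (EE n a) := thmA f h0
  refine ⟨low_degree f h1, ?_⟩
  obtain ⟨e1⟩ := top_degree hn f
  obtain ⟨_, _, hr⟩ := thmB f h0 h1
  let e2 : (MvPolynomial (Fin n) ℂ ⧸ WW 1 f) ≃ₗ[ℂ] (MvPolynomial (Fin n) ℂ ⧸ WW 0 f) :=
    LinearEquiv.ofFinrankEq _ _ hr
  let e3 : (MvPolynomial (Fin n) ℂ ⧸ WW 0 f) ≃ₗ[ℂ]
      (MvPolynomial (Fin n) ℂ ⧸ Ideal.span (Set.range fun i => pderiv i f)) :=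
    (Submodule.quotEquivOfEq _ _ (WW_zero f)).trans
      (Submodule.Quotient.restrictScalarsEquiv ℂ _)
  let e := (e1.trans e2).trans e3
  exact ⟨⟨e⟩, e.rank_eq⟩
end Fin

end Part14

/-- Let `f ∈ ℂ[x_1,…,x_n]` be tame: the Euclidean norm of
the gradient `∇f` is bounded below by some `δ > 0` outside some ball of
radius `C`.  Then `H^k_f(ℂ) = 0` for `k ≠ n` and `H^n_f(ℂ)` is isomorphic to
the Milnor (Jacobian) ring `ℂ[x_1,…,x_n]/(∂_1 f, …, ∂_n f)`; in particular
`dim_ℂ H^n_f(ℂ)` equals the dimension of the Milnor ring. -/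
theorem tame_twisted_deRham_is_milnor_ring {n : ℕ} (hn : 0 < n)
    (f : MvPolynomial (Fin n) ℂ)
    (htame : ∃ C δ : ℝ, 0 < C ∧ 0 < δ ∧
      ∀ x : Fin n → ℂ,
        C ≤ Real.sqrt (∑ i, ‖x i‖ ^ 2) →
        δ ≤ Real.sqrt (∑ i, ‖eval x (pderiv i f)‖ ^ 2)) :
    (∀ k : ℕ, k ≠ n → Subsingleton (Hf f k)) ∧
    Nonempty
      ((Hf f n) ≃ₗ[ℂ]
        (MvPolynomial (Fin n) ℂ ⧸
          Ideal.span (Set.range fun i => pderiv i f))) ∧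
    Module.rank ℂ (Hf f n) =
      Module.rank ℂ
        (MvPolynomial (Fin n) ℂ ⧸
          Ideal.span (Set.range fun i => pderiv i f)) :=
  final hn f htame

end
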